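/- arXiv:1910.09529 — 14 statements merged into one kernel-verified Lean document; each statement's English description precedes it below -/
import Mathlib

section
/- Let f : ℝ^d → ℝ be convex and differentiable and let x* be a minimizer of f with f* = f(x*). Let x⁰, x¹, x² ∈ ℝ^d (playing the roles of x^{k-1}, x^k, x^{k+1}) and λ₀, λ₁ > 0 satisfy x¹ = x⁰ − λ₀∇f(x⁰), x² = x¹ − λ₁∇f(x¹), and 2λ₁‖∇f(x¹) − ∇f(x⁰)‖ ≤ ‖x¹ − x⁰‖. Set θ = λ₁/λ₀. Then ‖x² − x*‖² + (1/2)‖x² − x¹‖² + 2λ₁(1+θ)(f(x¹) − f*) ≤ ‖x¹ − x*‖² + (1/2)‖x¹ − x⁰‖² + 2λ₁θ(f(x⁰) − f*). -/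
open scoped RealInnerProductSpace

/-- Lemma 1 (one-step energy inequality) of "Adaptive gradient descent without descent". -/
theorem adgd_energy_lemma {d : ℕ}
    (f : EuclideanSpace ℝ (Fin d) → ℝ)
    (f' : EuclideanSpace ℝ (Fin d) → EuclideanSpace ℝ (Fin d))
    (hdiff : ∀ x, HasGradientAt f (f' x) x)
    (hconv : ∀ x y, f x + ⟪f' x, y - x⟫ ≤ f y)
    (xstar : EuclideanSpace ℝ (Fin d))
    (hmin : ∀ y, f xstar ≤ f y)
    (x0 x1 x2 : EuclideanSpace ℝ (Fin d)) (l0 l1 : ℝ)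
    (hl0 : 0 < l0) (hl1 : 0 < l1)
    (hx1 : x1 = x0 - l0 • f' x0) (hx2 : x2 = x1 - l1 • f' x1)
    (hstep : 2 * l1 * ‖f' x1 - f' x0‖ ≤ ‖x1 - x0‖) :
    ‖x2 - xstar‖ ^ 2 + (1 / 2) * ‖x2 - x1‖ ^ 2
      + 2 * l1 * (1 + l1 / l0) * (f x1 - f xstar)
    ≤ ‖x1 - xstar‖ ^ 2 + (1 / 2) * ‖x1 - x0‖ ^ 2
      + 2 * l1 * (l1 / l0) * (f x0 - f xstar) := by
  have c1 := hconv x1 xstar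
  have c2 := hconv x1 x0
  have e0 : x0 - x1 = l0 • f' x0 := by rw [hx1]; abel
  have e2 : x2 - x1 = -(l1 • f' x1) := by rw [hx2]; abel
  have e3 : x2 - xstar = (x1 - xstar) - l1 • f' x1 := by rw [hx2]; abel
  have e4 : xstar - x1 = -(x1 - xstar) := by abel
  have cs := real_inner_le_norm (f' x1) (f' x1 - f' x0)
  rw [inner_sub_right, real_inner_self_eq_norm_sq] at cs
  rw [e0, inner_smul_right] at c2
  rw [e4, inner_neg_right] at c1
  have n2 : ‖x2 - x1‖ ^ 2 = l1 ^ 2 * ‖f' x1‖ ^ 2 := by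
    rw [e2, norm_neg, norm_smul, mul_pow, Real.norm_eq_abs, sq_abs]
  have n3 : ‖x2 - xstar‖ ^ 2
      = ‖x1 - xstar‖ ^ 2 - 2 * (l1 * ⟪f' x1, x1 - xstar⟫) + l1 ^ 2 * ‖f' x1‖ ^ 2 := by
    rw [e3, norm_sub_sq_real, inner_smul_right, real_inner_comm, norm_smul, mul_pow,
      Real.norm_eq_abs, sq_abs]
  rw [n2, n3]
  clear n2 n3 e0 e2 e3 e4 hx1 hx2
  generalize ‖x1 - x0‖ = a at *
  generalize ‖f' x1 - f' x0‖ = b at *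
  have hg : 0 ≤ ‖f' x1‖ := norm_nonneg _
  generalize ‖f' x1‖ = g at *
  generalize (⟪f' x1, f' x0⟫ : ℝ) = p at *
  generalize (⟪f' x1, x1 - xstar⟫ : ℝ) = q at *
  have k1 : l1 * (f x1 - f xstar) ≤ l1 * q :=
    mul_le_mul_of_nonneg_left (by linarith) hl1.le
  have k2 : l1 ^ 2 * p ≤ l1 * (l1 / l0) * (f x0 - f x1) := by
    have h : l1 * (l1 / l0) * (l0 * p) ≤ l1 * (l1 / l0) * (f x0 - f x1) :=
      mul_le_mul_of_nonneg_left (by linarith) (by positivity)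
    have h' : l1 * (l1 / l0) * (l0 * p) = l1 ^ 2 * p := by field_simp
    linarith
  have k3 : l1 ^ 2 * (g ^ 2 - p) ≤ l1 ^ 2 * (g * b) :=
    mul_le_mul_of_nonneg_left cs (by positivity)
  have k4 : (l1 * g) * (2 * l1 * b) ≤ (l1 * g) * a :=
    mul_le_mul_of_nonneg_left hstep (by positivity)
  nlinarith [sq_nonneg (l1 * g - a)]
end

section
/- Let f : ℝ^d → ℝ be convex and differentiable, x* a minimizer of f with f* = f(x*), and let (x^k)_{k≥0} in ℝ^d and (λ_k)_{k≥0} with λ_k > 0 satisfy, for all k ≥ 0, x^{k+1} = x^k − λ_k∇f(x^k), and for all k ≥ 1 the two stepsize conditions 2λ_k‖∇f(x^k) − ∇f(x^{k−1})‖ ≤ ‖x^k − x^{k−1}‖ and λ_{k+1}² ≤ (1 + θ_k)λ_k², where θ_k = λ_k/λ_{k−1}. Define the energy E_k = ‖x^k − x*‖² + (1/2)‖x^k − x^{k−1}‖² + 2λ_kθ_k(f(x^{k−1}) − f*) for k ≥ 1. Then E_{k+1} ≤ E_k for all k ≥ 1. -/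
open scoped RealInnerProductSpace

/-- Monotonicity of the Lyapunov energy for adaptive gradient descent. -/
theorem adgd_energy_decreasing {d : ℕ}
    (f : EuclideanSpace ℝ (Fin d) → ℝ)
    (f' : EuclideanSpace ℝ (Fin d) → EuclideanSpace ℝ (Fin d))
    (hdiff : ∀ x, HasGradientAt f (f' x) x)
    (hconv : ∀ x y, f x + ⟪f' x, y - x⟫ ≤ f y)
    (xstar : EuclideanSpace ℝ (Fin d))
    (hmin : ∀ y, f xstar ≤ f y)
    (x : ℕ → EuclideanSpace ℝ (Fin d)) (lam : ℕ → ℝ)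
    (hlam : ∀ k, 0 < lam k)
    (hupd : ∀ k, x (k + 1) = x k - lam k • f' (x k))
    (hstep1 : ∀ k, 1 ≤ k → 2 * lam k * ‖f' (x k) - f' (x (k - 1))‖ ≤ ‖x k - x (k - 1)‖)
    (hstep2 : ∀ k, 1 ≤ k → lam (k + 1) ^ 2 ≤ (1 + lam k / lam (k - 1)) * lam k ^ 2) :
    ∀ k, 1 ≤ k →
      ‖x (k + 1) - xstar‖ ^ 2 + (1 / 2) * ‖x (k + 1) - x k‖ ^ 2
          + 2 * lam (k + 1) * (lam (k + 1) / lam k) * (f (x k) - f xstar)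
      ≤ ‖x k - xstar‖ ^ 2 + (1 / 2) * ‖x k - x (k - 1)‖ ^ 2
          + 2 * lam k * (lam k / lam (k - 1)) * (f (x (k - 1)) - f xstar) := by
  rintro k hk
  obtain ⟨n, rfl⟩ : ∃ n, k = n + 1 := ⟨k - 1, by omega⟩
  have h1 := hstep1 (n + 1) hk
  have h2 := hstep2 (n + 1) hk
  simp only [Nat.add_sub_cancel] at h1 h2 ⊢
  have hl := hlam (n + 1)
  have hm := hlam n
  have hp := hupd n
  have hq := hupd (n + 1)
  have c1 := hconv (x (n + 1)) xstar
  have c2 := hconv (x (n + 1)) (x n)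
  have hf := hmin (x (n + 1))
  set l := lam (n + 1)
  set m := lam n
  set r := lam (n + 1 + 1)
  set g := f' (x (n + 1))
  set h := f' (x n)
  have e1 : x n - x (n + 1) = m • h := by rw [hp]; abel
  have e2 : x (n + 1) - x n = -(m • h) := by rw [hp]; abel
  have e3 : x (n + 1 + 1) - x (n + 1) = -(l • g) := by rw [hq]; abel
  have e4 : x (n + 1 + 1) - xstar = (x (n + 1) - xstar) - l • g := by rw [hq]; abel
  have e5 : xstar - x (n + 1) = -(x (n + 1) - xstar) := by abel
  rw [e1, inner_smul_right] at c2
  rw [e5, inner_neg_right] at c1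
  rw [e2, norm_neg, norm_smul, Real.norm_of_nonneg hm.le] at h1
  rw [e2, e3, e4, norm_neg, norm_neg, norm_sub_sq_real, inner_smul_right, norm_smul, norm_smul,
    Real.norm_of_nonneg hm.le, Real.norm_of_nonneg hl.le, real_inner_comm]
  have h1s : (2 * l * ‖g - h‖) ^ 2 ≤ (m * ‖h‖) ^ 2 := by gcongr
  have eg : ‖g - h‖ ^ 2 = ‖g‖ ^ 2 - 2 * ⟪g, h⟫ + ‖h‖ ^ 2 := norm_sub_sq_real g h
  have eg2 : 0 ≤ ‖g‖ ^ 2 - 4 * ⟪g, h⟫ + 4 * ‖h‖ ^ 2 := by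
    have := norm_sub_sq_real g ((2 : ℝ) • h)
    rw [inner_smul_right, norm_smul, Real.norm_of_nonneg (by norm_num)] at this
    nlinarith [sq_nonneg ‖g - (2 : ℝ) • h‖]
  rw [mul_pow, eg] at h1s
  have k1 : r * (r / l) ≤ (1 + l / m) * l := by
    rw [← mul_div_assoc, div_le_iff₀ hl]; nlinarith
  have k2 := mul_le_mul_of_nonneg_right k1 (sub_nonneg.2 hf)
  have k3 := mul_le_mul_of_nonneg_left c1 hl.le
  have k4 := mul_le_mul_of_nonneg_left c2 (show 0 ≤ l * (l / m) by positivity)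
  have k5 : l * (l / m) * (m * ⟪g, h⟫) = l ^ 2 * ⟪g, h⟫ := by field_simp
  rw [mul_add, k5] at k4
  have k6 := mul_nonneg (sq_nonneg l) eg2
  linarith
end

section
/- Let f : ℝ^d → ℝ be convex and differentiable, x* a minimizer of f with f* = f(x*), and let (x^k)_{k≥0} in ℝ^d and (λ_k)_{k≥0} with λ_k > 0 satisfy, for all k ≥ 0, x^{k+1} = x^k − λ_k∇f(x^k), and for all k ≥ 1 the two stepsize conditions 2λ_k‖∇f(x^k) − ∇f(x^{k−1})‖ ≤ ‖x^k − x^{k−1}‖ and λ_{k+1}² ≤ (1 + θ_k)λ_k², where θ_k = λ_k/λ_{k−1}. Define D = ‖x¹ − x*‖² + (1/2)‖x¹ − x⁰‖² + 2λ₁θ₁(f(x⁰) − f*). Then for every k ≥ 1, each weight w_i = λ_i(1+θ_i) − λ_{i+1}θ_{i+1} (1 ≤ i ≤ k−1) is nonnegative, and ‖x^{k+1} − x*‖² + (1/2)‖x^{k+1} − x^k‖² + 2λ_k(1+θ_k)(f(x^k) − f*) + 2·Σ_{i=1}^{k−1} w_i (f(x^i) − f*) ≤ D. -/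
open scoped RealInnerProductSpace BigOperators

theorem adgd_alg {E : Type*} [NormedAddCommGroup E] [InnerProductSpace ℝ E]
    (u g h : E) (l m F0 F1 Fs : ℝ) (hl : 0 < l) (hm : 0 < m)
    (h1 : F1 - Fs ≤ ⟪g, u⟫) (h2 : F1 + m * ⟪g, h⟫ ≤ F0)
    (h3 : 2 * l * ‖g - h‖ ≤ m * ‖h‖) :
    ‖u - l • g‖ ^ 2 + (1 / 2) * (l * ‖g‖) ^ 2 + 2 * l * (1 + l / m) * (F1 - Fs)
      ≤ ‖u‖ ^ 2 + (1 / 2) * (m * ‖h‖) ^ 2 + 2 * l * (l / m) * (F0 - Fs) := by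
  have e1 : ‖u - l • g‖ ^ 2 = ‖u‖ ^ 2 - 2 * l * ⟪g, u⟫ + l ^ 2 * ‖g‖ ^ 2 := by
    rw [norm_sub_sq_real, inner_smul_right, real_inner_comm, norm_smul, mul_pow]
    simp; ring
  have e2 : ⟪g, g - h⟫ = ‖g‖ ^ 2 - ⟪g, h⟫ := by
    rw [inner_sub_right, real_inner_self_eq_norm_sq]
  have c := real_inner_le_norm g (g - h)
  rw [e2] at c
  have a1 : 2 * l * (l / m) * (F1 + m * ⟪g, h⟫) ≤ 2 * l * (l / m) * F0 :=
    mul_le_mul_of_nonneg_left h2 (by positivity)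
  have a2 : 2 * l * (l / m) * (F1 + m * ⟪g, h⟫)
      = 2 * l * (l / m) * F1 + 2 * l ^ 2 * ⟪g, h⟫ := by
    field_simp
  have a3 : 2 * l * (F1 - Fs) ≤ 2 * l * ⟪g, u⟫ :=
    mul_le_mul_of_nonneg_left h1 (by positivity)
  have a4 : 2 * l ^ 2 * (‖g‖ ^ 2 - ⟪g, h⟫) ≤ 2 * l ^ 2 * (‖g‖ * ‖g - h‖) :=
    mul_le_mul_of_nonneg_left c (by positivity)
  have a5 : l * ‖g‖ * (2 * l * ‖g - h‖) ≤ l * ‖g‖ * (m * ‖h‖) :=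
    mul_le_mul_of_nonneg_left h3 (by positivity)
  have a6 := sq_nonneg (l * ‖g‖ - m * ‖h‖)
  rw [e1]
  nlinarith

/-- Telescoped energy bound for adaptive gradient descent (inequality (7) of the paper),
together with nonnegativity of the weights. -/
theorem adgd_telescoped_bound {d : ℕ}
    (f : EuclideanSpace ℝ (Fin d) → ℝ)
    (f' : EuclideanSpace ℝ (Fin d) → EuclideanSpace ℝ (Fin d))
    (hdiff : ∀ x, HasGradientAt f (f' x) x)
    (hconv : ∀ x y, f x + ⟪f' x, y - x⟫ ≤ f y)
    (xstar : EuclideanSpace ℝ (Fin d))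
    (hmin : ∀ y, f xstar ≤ f y)
    (x : ℕ → EuclideanSpace ℝ (Fin d)) (lam : ℕ → ℝ)
    (hlam : ∀ k, 0 < lam k)
    (hupd : ∀ k, x (k + 1) = x k - lam k • f' (x k))
    (hstep1 : ∀ k, 1 ≤ k → 2 * lam k * ‖f' (x k) - f' (x (k - 1))‖ ≤ ‖x k - x (k - 1)‖)
    (hstep2 : ∀ k, 1 ≤ k → lam (k + 1) ^ 2 ≤ (1 + lam k / lam (k - 1)) * lam k ^ 2) :
    ∀ k, 1 ≤ k →
      (∀ i ∈ Finset.Icc 1 (k - 1),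
        0 ≤ lam i * (1 + lam i / lam (i - 1)) - lam (i + 1) * (lam (i + 1) / lam i)) ∧
      ‖x (k + 1) - xstar‖ ^ 2 + (1 / 2) * ‖x (k + 1) - x k‖ ^ 2
          + 2 * lam k * (1 + lam k / lam (k - 1)) * (f (x k) - f xstar)
          + 2 * ∑ i ∈ Finset.Icc 1 (k - 1),
              (lam i * (1 + lam i / lam (i - 1)) - lam (i + 1) * (lam (i + 1) / lam i))
                * (f (x i) - f xstar)
      ≤ ‖x 1 - xstar‖ ^ 2 + (1 / 2) * ‖x 1 - x 0‖ ^ 2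
          + 2 * lam 1 * (lam 1 / lam 0) * (f (x 0) - f xstar) := by
  have upd' : ∀ k, ‖x (k + 1) - x k‖ = lam k * ‖f' (x k)‖ := by
    intro k
    rw [hupd k, sub_sub_cancel_left, norm_neg, norm_smul, Real.norm_of_nonneg (hlam k).le]
  have key : ∀ n, ‖x (n + 2) - xstar‖ ^ 2 + (1 / 2) * ‖x (n + 2) - x (n + 1)‖ ^ 2
      + 2 * lam (n + 1) * (1 + lam (n + 1) / lam n) * (f (x (n + 1)) - f xstar)
      ≤ ‖x (n + 1) - xstar‖ ^ 2 + (1 / 2) * ‖x (n + 1) - x n‖ ^ 2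
      + 2 * lam (n + 1) * (lam (n + 1) / lam n) * (f (x n) - f xstar) := by
    intro n
    have h1 := hconv (x (n + 1)) xstar
    have h2 := hconv (x (n + 1)) (x n)
    have h3 := hstep1 (n + 1) (by omega)
    rw [Nat.add_sub_cancel, upd' n] at h3
    have e : x n - x (n + 1) = lam n • f' (x n) := by rw [hupd n, sub_sub_cancel]
    rw [e, inner_smul_right] at h2
    rw [← neg_sub (x (n + 1)) xstar, inner_neg_right] at h1
    have := adgd_alg (x (n + 1) - xstar) (f' (x (n + 1))) (f' (x n)) (lam (n + 1)) (lam n)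
      (f (x n)) (f (x (n + 1))) (f xstar) (hlam _) (hlam _) (by linarith) h2 h3
    rw [upd' (n + 1), upd' n, hupd (n + 1), sub_right_comm]
    exact this
  intro k hk
  constructor
  · intro i hi
    have hi1 := (Finset.mem_Icc.mp hi).1
    have h := hstep2 i hi1
    have hp := hlam i
    have : lam (i + 1) * (lam (i + 1) / lam i) ≤ lam i * (1 + lam i / lam (i - 1)) := by
      rw [← mul_div_assoc, div_le_iff₀ hp]
      nlinarith
    linarith
  · obtain ⟨n, rfl⟩ : ∃ n, k = n + 1 := ⟨k - 1, by omega⟩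
    clear hk
    induction n with
    | zero => simpa using key 0
    | succ n ih =>
      simp only [Nat.add_sub_cancel] at ih ⊢
      rw [Finset.sum_Icc_succ_top (by omega)]
      have := key (n + 1)
      simp only [Nat.add_sub_cancel] at *
      linarith
end

section
/- Let f : ℝ^d → ℝ be convex and differentiable, x* a minimizer of f with f* = f(x*), and let (x^k)_{k≥0} in ℝ^d and (λ_k)_{k≥0} with λ_k > 0 satisfy, for all k ≥ 0, x^{k+1} = x^k − λ_k∇f(x^k), and for all k ≥ 1 the two stepsize conditions 2λ_k‖∇f(x^k) − ∇f(x^{k−1})‖ ≤ ‖x^k − x^{k−1}‖ and λ_{k+1}² ≤ (1 + θ_k)λ_k², where θ_k = λ_k/λ_{k−1}. Define D = ‖x¹ − x*‖² + (1/2)‖x¹ − x⁰‖² + 2λ₁θ₁(f(x⁰) − f*), weights w_i = λ_i(1+θ_i) − λ_{i+1}θ_{i+1}, S_k = λ_k(1+θ_k) + Σ_{i=1}^{k−1} w_i, and the ergodic iterate x̂^k = (λ_k(1+θ_k)x^k + Σ_{i=1}^{k−1} w_i x^i)/S_k. Then for every k ≥ 1 it holds that S_k = Σ_{i=1}^{k}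 λ_i + λ₁θ₁ and f(x̂^k) − f* ≤ D/(2S_k). -/
open scoped RealInnerProductSpace BigOperators

/-- The weights `w_i = λ_i (1 + θ_i) − λ_{i+1} θ_{i+1}` of Theorem 2. -/
noncomputable def adgdW (lam : ℕ → ℝ) (i : ℕ) : ℝ :=
  lam i * (1 + lam i / lam (i - 1)) - lam (i + 1) * (lam (i + 1) / lam i)

/-- The normalization `S_k = λ_k (1 + θ_k) + Σ_{i=1}^{k−1} w_i` of Theorem 2. -/
noncomputable def adgdS (lam : ℕ → ℝ) (k : ℕ) : ℝ :=
  lam k * (1 + lam k / lam (k - 1)) + ∑ i ∈ Finset.Icc 1 (k - 1), adgdW lam i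

/-- The ergodic iterate `x̂^k` of Theorem 2. -/
noncomputable def adgdXhat {d : ℕ} (lam : ℕ → ℝ) (x : ℕ → EuclideanSpace ℝ (Fin d))
    (k : ℕ) : EuclideanSpace ℝ (Fin d) :=
  (adgdS lam k)⁻¹ •
    ((lam k * (1 + lam k / lam (k - 1))) • x k + ∑ i ∈ Finset.Icc 1 (k - 1), adgdW lam i • x i)

theorem adgd_onestep {E : Type*} [NormedAddCommGroup E] [InnerProductSpace ℝ E]
    (a g h : E) (l m F0 F1 : ℝ) (hl : 0 < l) (hm : 0 < m)
    (h1 : F1 ≤ ⟪g, a⟫) (h2 : F1 + m * ⟪g, h⟫ ≤ F0)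
    (h3 : 2 * l * ‖g - h‖ ≤ ‖m • h‖) :
    ‖a - l • g‖ ^ 2 + (1 / 2) * ‖l • g‖ ^ 2 + 2 * (l * (1 + l / m)) * F1
      ≤ ‖a‖ ^ 2 + (1 / 2) * ‖m • h‖ ^ 2 + 2 * (l * (l / m)) * F0 := by
  have h4 : (2 * l * ‖g - h‖) ^ 2 ≤ ‖m • h‖ ^ 2 := by gcongr
  have e1 : ‖a - l • g‖ ^ 2 = ‖a‖ ^ 2 - 2 * l * ⟪g, a⟫ + l ^ 2 * ‖g‖ ^ 2 := by
    rw [norm_sub_sq_real, inner_smul_right, norm_smul, mul_pow, real_inner_comm, Real.norm_eq_abs,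
      sq_abs]
    ring
  have e2 : ‖l • g‖ ^ 2 = l ^ 2 * ‖g‖ ^ 2 := by
    rw [norm_smul, mul_pow, Real.norm_eq_abs, sq_abs]
  have e3 := norm_sub_sq_real g h
  have e4 : 0 ≤ ‖g‖ ^ 2 - 4 * ⟪g, h⟫ + 4 * ‖h‖ ^ 2 := by
    have := norm_sub_sq_real g ((2 : ℝ) • h)
    rw [inner_smul_right, norm_smul, mul_pow] at this
    norm_num at this
    nlinarith [sq_nonneg ‖g - (2 : ℝ) • h‖]
  have h5 := mul_le_mul_of_nonneg_left h2 (by positivity : 0 ≤ 2 * (l * (l / m)))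
  have e5 : 2 * (l * (l / m)) * (F1 + m * ⟪g, h⟫)
      = 2 * (l * (l / m)) * F1 + 2 * l ^ 2 * ⟪g, h⟫ := by
    field_simp
  have h6 := mul_le_mul_of_nonneg_left h1 hl.le
  have h7 := mul_nonneg (sq_nonneg l) e4
  rw [mul_pow, e3] at h4
  rw [e1, e2]
  nlinarith

theorem adgdS_eq (lam : ℕ → ℝ) (n : ℕ) :
    adgdS lam (n + 1) = (∑ i ∈ Finset.Icc 1 (n + 1), lam i) + lam 1 * (lam 1 / lam 0) := by
  induction n with
  | zero => simp [adgdS]; ring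
  | succ n ih =>
    rw [Finset.sum_Icc_succ_top (by omega)]
    unfold adgdS at ih ⊢
    simp only [Nat.add_sub_cancel] at ih ⊢
    rw [Finset.sum_Icc_succ_top (by omega)]
    simp only [adgdW, Nat.add_sub_cancel] at ih ⊢
    linarith

/-- Theorem 2 (complexity part) of "Adaptive gradient descent without descent":
`S_k = Σ_{i=1}^k λ_i + λ₁θ₁` and `f(x̂^k) − f* ≤ D / (2 S_k)`. -/
theorem adgd_ergodic_rate {d : ℕ}
    (f : EuclideanSpace ℝ (Fin d) → ℝ)
    (f' : EuclideanSpace ℝ (Fin d) → EuclideanSpace ℝ (Fin d))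
    (hdiff : ∀ x, HasGradientAt f (f' x) x)
    (hconv : ∀ x y, f x + ⟪f' x, y - x⟫ ≤ f y)
    (xstar : EuclideanSpace ℝ (Fin d))
    (hmin : ∀ y, f xstar ≤ f y)
    (x : ℕ → EuclideanSpace ℝ (Fin d)) (lam : ℕ → ℝ)
    (hlam : ∀ k, 0 < lam k)
    (hupd : ∀ k, x (k + 1) = x k - lam k • f' (x k))
    (hstep1 : ∀ k, 1 ≤ k → 2 * lam k * ‖f' (x k) - f' (x (k - 1))‖ ≤ ‖x k - x (k - 1)‖)
    (hstep2 : ∀ k, 1 ≤ k → lam (k + 1) ^ 2 ≤ (1 + lam k / lam (k - 1)) * lam k ^ 2) :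
    ∀ k, 1 ≤ k →
      adgdS lam k = (∑ i ∈ Finset.Icc 1 k, lam i) + lam 1 * (lam 1 / lam 0) ∧
      f (adgdXhat lam x k) - f xstar ≤
        (‖x 1 - xstar‖ ^ 2 + (1 / 2) * ‖x 1 - x 0‖ ^ 2
            + 2 * lam 1 * (lam 1 / lam 0) * (f (x 0) - f xstar)) / (2 * adgdS lam k) := by
  have hw : ∀ i, 1 ≤ i → 0 ≤ adgdW lam i := by
    intro i hi
    have := hstep2 i hi
    have hp := hlam i
    unfold adgdW
    have : lam (i + 1) * (lam (i + 1) / lam i) ≤ lam i * (1 + lam i / lam (i - 1)) := by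
      rw [← mul_div_assoc, div_le_iff₀ hp]
      nlinarith
    linarith
  have hone : ∀ n, ‖x (n + 2) - xstar‖ ^ 2 + (1 / 2) * ‖x (n + 2) - x (n + 1)‖ ^ 2
      + 2 * (lam (n + 1) * (1 + lam (n + 1) / lam n)) * (f (x (n + 1)) - f xstar)
      ≤ ‖x (n + 1) - xstar‖ ^ 2 + (1 / 2) * ‖x (n + 1) - x n‖ ^ 2
      + 2 * (lam (n + 1) * (lam (n + 1) / lam n)) * (f (x n) - f xstar) := by
    intro n
    have d1 : x (n + 1) - x n = -(lam n • f' (x n)) := by rw [hupd n]; abel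
    have d2 : x (n + 2) - x (n + 1) = -(lam (n + 1) • f' (x (n + 1))) := by
      rw [hupd (n + 1)]; abel
    have d3 : x (n + 2) - xstar = (x (n + 1) - xstar) - lam (n + 1) • f' (x (n + 1)) := by
      rw [hupd (n + 1)]; abel
    have s1 := hstep1 (n + 1) (by omega)
    simp only [Nat.add_sub_cancel] at s1
    rw [d1, norm_neg] at s1
    rw [d1, d2, d3, norm_neg, norm_neg]
    refine adgd_onestep _ _ _ _ _ _ _ (hlam _) (hlam _) ?_ ?_ s1
    · have := hconv (x (n + 1)) xstar
      rw [← neg_sub, inner_neg_right] at this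
      linarith
    · have := hconv (x (n + 1)) (x n)
      rw [← neg_sub, d1, neg_neg, inner_smul_right] at this
      linarith
  have hsum : ∀ n, ‖x (n + 2) - xstar‖ ^ 2 + (1 / 2) * ‖x (n + 2) - x (n + 1)‖ ^ 2
      + 2 * (lam (n + 1) * (1 + lam (n + 1) / lam n)) * (f (x (n + 1)) - f xstar)
      + 2 * ∑ i ∈ Finset.Icc 1 n, adgdW lam i * (f (x i) - f xstar)
      ≤ ‖x 1 - xstar‖ ^ 2 + (1 / 2) * ‖x 1 - x 0‖ ^ 2
            + 2 * lam 1 * (lam 1 / lam 0) * (f (x 0) - f xstar) := by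
    intro n
    induction n with
    | zero =>
      have := hone 0
      simp only [zero_add] at this
      simp only [zero_add, Finset.Icc_eq_empty_of_lt zero_lt_one, Finset.sum_empty]
      linarith
    | succ n ih =>
      rw [Finset.sum_Icc_succ_top (by omega)]
      have := hone (n + 1)
      simp only [adgdW, Nat.add_sub_cancel] at ih this ⊢
      linarith
  intro k hk
  obtain ⟨n, rfl⟩ : ∃ n, k = n + 1 := ⟨k - 1, by omega⟩
  refine ⟨adgdS_eq lam n, ?_⟩
  have hS : 0 < adgdS lam (n + 1) := by
    rw [adgdS_eq]
    have h0 := hlam 0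
    have h1 := hlam 1
    have : 0 ≤ ∑ i ∈ Finset.Icc 1 (n + 1), lam i := Finset.sum_nonneg fun i _ => (hlam i).le
    positivity
  rw [le_div_iff₀ (by positivity)]
  have hs := hsum n
  set z := adgdXhat lam x (n + 1) with hz
  set c := lam (n + 1) * (1 + lam (n + 1) / lam n) with hc
  have hc0 : 0 ≤ c := by
    have h0 := hlam n
    have h1 := hlam (n + 1)
    positivity
  have hSe : adgdS lam (n + 1) = c + ∑ i ∈ Finset.Icc 1 n, adgdW lam i := by
    simp [adgdS, hc]
  have hze : c • x (n + 1) + ∑ i ∈ Finset.Icc 1 n, adgdW lam i • x i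
      = adgdS lam (n + 1) • z := by
    rw [hz, adgdXhat, smul_inv_smul₀ hS.ne']
    simp [hc]
  have hin : c * ⟪f' z, x (n + 1) - z⟫ + ∑ i ∈ Finset.Icc 1 n, adgdW lam i * ⟪f' z, x i - z⟫
      = 0 := by
    have := congrArg (fun v => ⟪f' z, v⟫) hze
    simp only [inner_add_right, inner_sum, inner_smul_right] at this
    simp only [inner_sub_right, mul_sub, Finset.sum_sub_distrib, ← Finset.sum_mul]
    rw [hSe] at this
    linarith
  have hj1 := mul_le_mul_of_nonneg_left (hconv z (x (n + 1))) hc0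
  have hj2 : ∑ i ∈ Finset.Icc 1 n, adgdW lam i * (f z + ⟪f' z, x i - z⟫)
      ≤ ∑ i ∈ Finset.Icc 1 n, adgdW lam i * f (x i) :=
    Finset.sum_le_sum fun i hi =>
      mul_le_mul_of_nonneg_left (hconv z (x i)) (hw i (Finset.mem_Icc.1 hi).1)
  simp only [mul_add, Finset.sum_add_distrib, ← Finset.sum_mul] at hj1 hj2
  simp only [mul_sub, Finset.sum_sub_distrib, ← Finset.sum_mul] at hs
  rw [hSe]
  have p1 := sq_nonneg ‖x (n + 2) - xstar‖
  have p2 := sq_nonneg ‖x (n + 2) - x (n + 1)‖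
  nlinarith
end

section
/- Let f : ℝ^d → ℝ be differentiable, let C ⊆ ℝ^d, and let L > 0 be such that ‖∇f(x) − ∇f(y)‖ ≤ L‖x − y‖ for all x, y ∈ C. Let (x^k)_{k≥0} ⊆ C and (λ_k)_{k≥0} satisfy: λ₀ > 0; x^{k+1} = x^k − λ_k∇f(x^k) for all k ≥ 0; ∇f(x¹) ≠ ∇f(x⁰) and λ₁ = ‖x¹ − x⁰‖/(2‖∇f(x¹) − ∇f(x⁰)‖); and for every k ≥ 2, λ_k = min{√(1+θ_{k−1})·λ_{k−1}, ‖x^k − x^{k−1}‖/(2‖∇f(x^k) − ∇f(x^{k−1})‖)} when ∇f(x^k) ≠ ∇f(x^{k−1}), and λ_k = √(1+θ_{k−1})·λ_{k−1} otherwise, where θ_k = λ_k/λ_{k−1}. Then λ_k ≥ 1/(2L) for every k ≥ 1. -/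
open scoped RealInnerProductSpace

/-- Lower bound `λ_k ≥ 1/(2L)` for the stepsizes of adaptive gradient descent,
when the iterates stay in a set `C` on which `∇f` is `L`-Lipschitz. -/
theorem adgd_stepsize_lower_bound {d : ℕ}
    (f : EuclideanSpace ℝ (Fin d) → ℝ)
    (f' : EuclideanSpace ℝ (Fin d) → EuclideanSpace ℝ (Fin d))
    (hdiff : ∀ x, HasGradientAt f (f' x) x)
    (C : Set (EuclideanSpace ℝ (Fin d))) (L : ℝ) (hL : 0 < L)
    (hLip : ∀ x ∈ C, ∀ y ∈ C, ‖f' x - f' y‖ ≤ L * ‖x - y‖)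
    (x : ℕ → EuclideanSpace ℝ (Fin d)) (hxC : ∀ k, x k ∈ C)
    (lam : ℕ → ℝ) (hl0 : 0 < lam 0)
    (hupd : ∀ k, x (k + 1) = x k - lam k • f' (x k))
    (hne1 : f' (x 1) ≠ f' (x 0))
    (hl1 : lam 1 = ‖x 1 - x 0‖ / (2 * ‖f' (x 1) - f' (x 0)‖))
    (hrec : ∀ k, 2 ≤ k →
      (f' (x k) ≠ f' (x (k - 1)) →
        lam k = min (Real.sqrt (1 + lam (k - 1) / lam (k - 2)) * lam (k - 1))
          (‖x k - x (k - 1)‖ / (2 * ‖f' (x k) - f' (x (k - 1))‖))) ∧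
      (f' (x k) = f' (x (k - 1)) →
        lam k = Real.sqrt (1 + lam (k - 1) / lam (k - 2)) * lam (k - 1))) :
    ∀ k, 1 ≤ k → 1 / (2 * L) ≤ lam k := by
  have hq : ∀ k, f' (x (k + 1)) ≠ f' (x k) →
      1 / (2 * L) ≤ ‖x (k + 1) - x k‖ / (2 * ‖f' (x (k + 1)) - f' (x k)‖) := by
    intro k hne
    have hpos : 0 < ‖f' (x (k + 1)) - f' (x k)‖ := norm_pos_iff.mpr (sub_ne_zero.mpr hne)
    have h := hLip _ (hxC (k + 1)) _ (hxC k)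
    rw [div_le_div_iff₀ (by positivity) (by positivity)]
    linarith
  have hLpos : 0 < 1 / (2 * L) := by positivity
  have key : ∀ k, 0 < lam k ∧ 1 / (2 * L) ≤ lam (k + 1) := by
    intro k
    induction k with
    | zero =>
      refine ⟨hl0, ?_⟩
      have h := hq 0 hne1
      simp only [zero_add] at h ⊢
      rw [hl1]
      exact h
    | succ k ih =>
      obtain ⟨h0, h1⟩ := ih
      have hp : 0 < lam (k + 1) := lt_of_lt_of_le hLpos h1
      refine ⟨hp, ?_⟩
      have hs : 1 ≤ Real.sqrt (1 + lam (k + 1) / lam k) := by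
        rw [Real.one_le_sqrt]
        have : 0 < lam (k + 1) / lam k := div_pos hp h0
        linarith
      have hm : 1 / (2 * L) ≤ Real.sqrt (1 + lam (k + 1) / lam k) * lam (k + 1) :=
        h1.trans (le_mul_of_one_le_left hp.le hs)
      obtain ⟨ha, hb⟩ := hrec (k + 2) (by omega)
      have e1 : k + 2 - 1 = k + 1 := by omega
      have e2 : k + 2 - 2 = k := by omega
      rw [e1, e2] at ha hb
      by_cases hc : f' (x (k + 2)) = f' (x (k + 1))
      · have := hb hc
        exact hm.trans_eq this.symm
      · have := ha hc
        exact (le_min hm (hq (k + 1) hc)).trans_eq this.symm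
  intro k hk
  obtain ⟨j, rfl⟩ := Nat.exists_eq_add_of_le' hk
  exact (key j).2
end

section
/- Let f : ℝ^d → ℝ be convex and differentiable, suppose ∇f is Lipschitz continuous on every compact subset of ℝ^d, and suppose f attains its minimum. Let (x^k)_{k≥0} and (λ_k)_{k≥0} be generated by adaptive gradient descent: λ₀ > 0; x¹ = x⁰ − λ₀∇f(x⁰); ∇f(x¹) ≠ ∇f(x⁰) and λ₁ = ‖x¹ − x⁰‖/(2‖∇f(x¹) − ∇f(x⁰)‖); and for every k ≥ 2, λ_k = min{√(1+θ_{k−1})·λ_{k−1}, ‖x^k − x^{k−1}‖/(2‖∇f(x^k) − ∇f(x^{k−1})‖)} when ∇f(x^k) ≠ ∇f(x^{k−1}) and λ_k = √(1+θ_{k−1})·λ_{k−1} otherwise, where θ_k = λ_k/λ_{k−1}, and x^{k+1} = x^k − λ_k∇f(x^k). Then the sequence (x^k) converges to a minimizer of f. -/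
open scoped RealInnerProductSpace

section helpers
variable {E : Type*} [NormedAddCommGroup E] [InnerProductSpace ℝ E]

/-- One-step energy inequality. -/
lemma adgd_step (x0 x1 x2 g0 g1 s : E) (l0 l1 f0 f1 fs e : ℝ) (h0 : 0 < l0) (h1 : 0 < l1)
    (hx1 : x1 = x0 - l0 • g0) (hx2 : x2 = x1 - l1 • g1)
    (hc : f1 + ⟪g1, s - x1⟫ + e ≤ fs) (hc2 : f1 + ⟪g1, x0 - x1⟫ ≤ f0)
    (hL : 2 * l1 * ‖g1 - g0‖ ≤ ‖x1 - x0‖) :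
    ‖x2 - s‖ ^ 2 + 1 / 2 * ‖x2 - x1‖ ^ 2 + 2 * l1 * (1 + l1 / l0) * (f1 - fs) + 2 * l1 * e
      ≤ ‖x1 - s‖ ^ 2 + 1 / 2 * ‖x1 - x0‖ ^ 2 + 2 * l1 * (l1 / l0) * (f0 - fs) := by
  have e1 : ‖x2 - s‖ ^ 2 = ‖x1 - s‖ ^ 2 + 2 * l1 * ⟪g1, s - x1⟫ + ‖x2 - x1‖ ^ 2 := by
    have : x2 - s = (x1 - s) - l1 • g1 := by rw [hx2]; abel
    have h' : x2 - x1 = - (l1 • g1) := by rw [hx2]; abel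
    rw [this, h', norm_sub_sq_real, norm_neg (l1 • g1), inner_smul_right, real_inner_comm,
      ← neg_sub s x1, inner_neg_right, norm_neg]
    ring
  have e2 : ‖x2 - x1‖ ^ 2 = l1 * ⟪g1 - g0, x1 - x2⟫ + l1 * ⟪g0, x1 - x2⟫ := by
    have h' : x1 - x2 = l1 • g1 := by rw [hx2]; abel
    rw [← mul_add, ← inner_add_left, sub_add_cancel, norm_sub_rev, h', inner_smul_right,
      norm_smul, real_inner_self_eq_norm_sq, Real.norm_of_nonneg h1.le]
    ring
  have e3 : l1 * ⟪g0, x1 - x2⟫ = l1 * (l1 / l0) * ⟪g1, x0 - x1⟫ := by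
    have h' : x1 - x2 = l1 • g1 := by rw [hx2]; abel
    have h'' : x0 - x1 = l0 • g0 := by rw [hx1]; abel
    rw [h', h'', inner_smul_right, inner_smul_right, real_inner_comm]
    field_simp
  have e4 : 2 * l1 * ⟪g1 - g0, x1 - x2⟫ ≤ 1 / 2 * ‖x1 - x0‖ ^ 2 + 1 / 2 * ‖x2 - x1‖ ^ 2 := by
    have := real_inner_le_norm (g1 - g0) (x1 - x2)
    rw [norm_sub_rev x1 x2] at this
    calc 2 * l1 * ⟪g1 - g0, x1 - x2⟫ ≤ 2 * l1 * (‖g1 - g0‖ * ‖x2 - x1‖) := by gcongr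
      _ = (2 * l1 * ‖g1 - g0‖) * ‖x2 - x1‖ := by ring
      _ ≤ ‖x1 - x0‖ * ‖x2 - x1‖ := by gcongr
      _ ≤ _ := by nlinarith [sq_nonneg (‖x1 - x0‖ - ‖x2 - x1‖)]
  have e5 : l1 * (l1 / l0) * ⟪g1, x0 - x1⟫ ≤ l1 * (l1 / l0) * (f0 - f1) := by
    gcongr; linarith
  have e6 : l1 * (⟪g1, s - x1⟫ + e) ≤ l1 * (fs - f1) := by
    gcongr; linarith
  nlinarith

/-- Strengthened convexity at a minimizer. -/
lemma adgd_coco (f : E → ℝ) (g : E → E) (hconv : ∀ x y, f x + ⟪g x, y - x⟫ ≤ f y)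
    (s x : E) (R L : ℝ) (hL : 0 < L) (hs : g s = 0) (hx : ‖x - s‖ ≤ R)
    (hlip : ∀ y, ‖y - s‖ ≤ R → ‖g y‖ ≤ L * ‖y - s‖) :
    f x + ⟪g x, s - x⟫ + ‖g x‖ ^ 2 / (4 * L) ≤ f s := by
  set t : ℝ := 1 / (2 * L) with ht
  have htp : 0 < t := by positivity
  have hgx := hlip x hx
  have hy : ‖(s + t • g x) - s‖ = t * ‖g x‖ := by
    rw [add_sub_cancel_left, norm_smul, Real.norm_of_nonneg htp.le]
  have hyR : t * ‖g x‖ ≤ R := by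
    have h1 : t * ‖g x‖ ≤ t * (L * ‖x - s‖) := by gcongr
    have h2 : t * (L * ‖x - s‖) = ‖x - s‖ / 2 := by rw [ht]; field_simp
    linarith [norm_nonneg (x - s)]
  have hgy := hlip (s + t • g x) (by rw [hy]; exact hyR)
  rw [hy] at hgy
  have a1 := hconv x (s + t • g x)
  have a2 := hconv (s + t • g x) s
  have b1 : ⟪g x, s + t • g x - x⟫ = ⟪g x, s - x⟫ + t * ‖g x‖ ^ 2 := by
    have : s + t • g x - x = (s - x) + t • g x := by abel
    rw [this, inner_add_right, inner_smul_right, real_inner_self_eq_norm_sq]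
  have b2 : ⟪g (s + t • g x), s - (s + t • g x)⟫ = - (t * ⟪g (s + t • g x), g x⟫) := by
    have : s - (s + t • g x) = - (t • g x) := by abel
    rw [this, inner_neg_right, inner_smul_right]
  have b3 : t * ⟪g (s + t • g x), g x⟫ ≤ t * ((L * (t * ‖g x‖)) * ‖g x‖) := by
    gcongr
    exact (real_inner_le_norm _ _).trans (by gcongr)
  have b4 : t * ((L * (t * ‖g x‖)) * ‖g x‖) = ‖g x‖ ^ 2 / (4 * L) := by
    rw [ht]; field_simp; ring
  have b5 : t * ‖g x‖ ^ 2 = ‖g x‖ ^ 2 / (4 * L) + ‖g x‖ ^ 2 / (4 * L) := by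
    rw [ht]; field_simp; ring
  linarith

end helpers

/-- Theorem 2 (convergence of the iterates) of "Adaptive gradient descent without descent":
for a convex function with locally Lipschitz gradient attaining its minimum, the iterates of
adaptive gradient descent converge to a minimizer. -/
theorem adgd_converges_to_minimizer {d : ℕ}
    (f : EuclideanSpace ℝ (Fin d) → ℝ)
    (f' : EuclideanSpace ℝ (Fin d) → EuclideanSpace ℝ (Fin d))
    (hdiff : ∀ x, HasGradientAt f (f' x) x)
    (hconv : ∀ x y, f x + ⟪f' x, y - x⟫ ≤ f y)
    (hlocLip : ∀ K : Set (EuclideanSpace ℝ (Fin d)), IsCompact K →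
      ∃ LK : ℝ, 0 ≤ LK ∧ ∀ x ∈ K, ∀ y ∈ K, ‖f' x - f' y‖ ≤ LK * ‖x - y‖)
    (hattains : ∃ xstar, ∀ y, f xstar ≤ f y)
    (x : ℕ → EuclideanSpace ℝ (Fin d)) (lam : ℕ → ℝ)
    (hl0 : 0 < lam 0)
    (hupd : ∀ k, x (k + 1) = x k - lam k • f' (x k))
    (hne1 : f' (x 1) ≠ f' (x 0))
    (hl1 : lam 1 = ‖x 1 - x 0‖ / (2 * ‖f' (x 1) - f' (x 0)‖))
    (hrec : ∀ k, 2 ≤ k →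
      (f' (x k) ≠ f' (x (k - 1)) →
        lam k = min (Real.sqrt (1 + lam (k - 1) / lam (k - 2)) * lam (k - 1))
          (‖x k - x (k - 1)‖ / (2 * ‖f' (x k) - f' (x (k - 1))‖))) ∧
      (f' (x k) = f' (x (k - 1)) →
        lam k = Real.sqrt (1 + lam (k - 1) / lam (k - 2)) * lam (k - 1))) :
    ∃ z, (∀ y, f z ≤ f y) ∧ Filter.Tendsto x Filter.atTop (nhds z) := by
  obtain ⟨s, hs⟩ := hattains
  have hg0 : ∀ w, (∀ y, f w ≤ f y) → f' w = 0 := by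
    intro w hw
    have h1 := (hdiff w).hasFDerivAt
    have h2 : IsLocalMin f w := Filter.Eventually.of_forall hw
    have h3 := h2.hasFDerivAt_eq_zero h1
    simpa using h3
  have hmin : ∀ w, f' w = 0 → ∀ y, f w ≤ f y := by
    intro w hw y
    have := hconv w y
    simpa [hw] using this
  -- unified recursion
  have hr : ∀ k, (f' (x (k+2)) ≠ f' (x (k+1)) →
        lam (k+2) = min (Real.sqrt (1 + lam (k+1) / lam k) * lam (k+1))
          (‖x (k+2) - x (k+1)‖ / (2 * ‖f' (x (k+2)) - f' (x (k+1))‖))) ∧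
      (f' (x (k+2)) = f' (x (k+1)) →
        lam (k+2) = Real.sqrt (1 + lam (k+1) / lam k) * lam (k+1)) := by
    intro k
    exact hrec (k+2) (by omega)
  have hpos' : ∀ k, 0 < lam k ∧ 0 < lam (k+1) := by
    intro k
    induction k with
    | zero =>
      refine ⟨hl0, ?_⟩
      rw [zero_add, hl1]
      have h1 : 0 < ‖f' (x 1) - f' (x 0)‖ := norm_pos_iff.2 (sub_ne_zero.2 hne1)
      have h2 : 0 < ‖x 1 - x 0‖ :=
        norm_pos_iff.2 (sub_ne_zero.2 (fun h => hne1 (by rw [h])))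
      positivity
    | succ k ih =>
      obtain ⟨i1, i2⟩ := ih
      refine ⟨i2, ?_⟩
      have h0 : 0 < Real.sqrt (1 + lam (k+1) / lam k) * lam (k+1) := by positivity
      by_cases h : f' (x (k+2)) = f' (x (k+1))
      · rw [show k + 1 + 1 = k + 2 from rfl, (hr k).2 h]; exact h0
      · rw [show k + 1 + 1 = k + 2 from rfl, (hr k).1 h]
        have h1 : 0 < ‖f' (x (k+2)) - f' (x (k+1))‖ := norm_pos_iff.2 (sub_ne_zero.2 h)
        have h2 : 0 < ‖x (k+2) - x (k+1)‖ :=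
          norm_pos_iff.2 (sub_ne_zero.2 (fun h' => h (by rw [h'])))
        exact lt_min h0 (by positivity)
  have hpos : ∀ k, 0 < lam k := fun k => (hpos' k).1
  have hle : ∀ k, lam (k+2) ≤ Real.sqrt (1 + lam (k+1) / lam k) * lam (k+1) := by
    intro k
    by_cases h : f' (x (k+2)) = f' (x (k+1))
    · exact ((hr k).2 h).le
    · rw [(hr k).1 h]; exact min_le_left _ _
  have hLip : ∀ k, 2 * lam (k+2) * ‖f' (x (k+2)) - f' (x (k+1))‖ ≤ ‖x (k+2) - x (k+1)‖ := by
    intro k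
    by_cases h : f' (x (k+2)) = f' (x (k+1))
    · rw [h]; simp
    · have h1 : 0 < ‖f' (x (k+2)) - f' (x (k+1))‖ := norm_pos_iff.2 (sub_ne_zero.2 h)
      have h2 : lam (k+2) ≤ ‖x (k+2) - x (k+1)‖ / (2 * ‖f' (x (k+2)) - f' (x (k+1))‖) := by
        rw [(hr k).1 h]; exact min_le_right _ _
      rw [le_div_iff₀ (by positivity)] at h2
      linarith
  have hth : ∀ k, lam (k+2) * (lam (k+2) / lam (k+1)) ≤ lam (k+1) * (1 + lam (k+1) / lam k) := by
    intro k
    have p0 := hpos k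
    have p1 := hpos (k+1)
    have p2 := hpos (k+2)
    have h1 : lam (k+2) ^ 2 ≤ (1 + lam (k+1) / lam k) * lam (k+1) ^ 2 := by
      calc lam (k+2) ^ 2 ≤ (Real.sqrt (1 + lam (k+1) / lam k) * lam (k+1)) ^ 2 := by
            gcongr; exact hle k
        _ = _ := by rw [mul_pow, Real.sq_sqrt (by positivity)]
    rw [← mul_div_assoc, div_le_iff₀ p1]
    nlinarith
  -- the energy
  let a : ℕ → ℝ := fun n => 1 / 2 * ‖x (n+2) - x (n+1)‖ ^ 2
    + 2 * lam (n+1) * (1 + lam (n+1) / lam n) * (f (x (n+1)) - f s)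
  have ha : ∀ n, 0 ≤ a n := by
    intro n
    have p0 := hpos n
    have p1 := hpos (n+1)
    have := sub_nonneg.2 (hs (x (n+1)))
    positivity
  have hstep : ∀ w, (∀ y, f w ≤ f y) → ∀ n e,
      f (x (n+2)) + ⟪f' (x (n+2)), w - x (n+2)⟫ + e ≤ f w →
      ‖x (n+3) - w‖ ^ 2 + a (n+1) + 2 * lam (n+2) * e ≤ ‖x (n+2) - w‖ ^ 2 + a n := by
    intro w hw n e he
    have hfw : f w = f s := le_antisymm (hw s) (hs w)
    have h1 := adgd_step (x (n+1)) (x (n+2)) (x (n+3)) (f' (x (n+1))) (f' (x (n+2))) w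
      (lam (n+1)) (lam (n+2)) (f (x (n+1))) (f (x (n+2))) (f w) e (hpos _) (hpos _)
      (hupd _) (hupd _) he (hconv _ _) (hLip n)
    have h2 := mul_le_mul_of_nonneg_right (hth n) (sub_nonneg.2 (hs (x (n+1))))
    simp only [a]
    rw [hfw] at h1
    rw [show n + 1 + 2 = n + 3 from rfl, show n + 1 + 1 = n + 2 from rfl]
    linarith
  have hanti : ∀ w, (∀ y, f w ≤ f y) → Antitone (fun n => ‖x (n+2) - w‖ ^ 2 + a n) := by
    intro w hw
    refine antitone_nat_of_succ_le (fun n => ?_)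
    have := hstep w hw n 0 (by rw [add_zero]; exact hconv _ _)
    simpa using this
  have hlim : ∀ w, (∀ y, f w ≤ f y) →
      ∃ l, Filter.Tendsto (fun n => ‖x (n+2) - w‖ ^ 2 + a n) Filter.atTop (nhds l) := by
    intro w hw
    refine ⟨_, tendsto_atTop_ciInf (hanti w hw) ⟨0, ?_⟩⟩
    rintro _ ⟨n, rfl⟩
    have := ha n
    positivity
  -- boundedness
  obtain ⟨R, hR⟩ : ∃ R : ℝ, ∀ n, ‖x (n+2) - s‖ ≤ R := by
    refine ⟨(‖x 2 - s‖ ^ 2 + a 0) + 1, fun n => ?_⟩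
    have h1 : ‖x (n+2) - s‖ ^ 2 + a n ≤ ‖x 2 - s‖ ^ 2 + a 0 := hanti s hs (Nat.zero_le n)
    have := ha n
    nlinarith [norm_nonneg (x (n+2) - s), sq_nonneg (‖x (n+2) - s‖ - 1)]
  obtain ⟨L, hLp, hL⟩ : ∃ L : ℝ, 0 < L ∧ ∀ u v, ‖u - s‖ ≤ R → ‖v - s‖ ≤ R →
      ‖f' u - f' v‖ ≤ L * ‖u - v‖ := by
    obtain ⟨L, h0, h⟩ := hlocLip _ (isCompact_closedBall s R)
    refine ⟨L + 1, by linarith, fun u v hu hv => ?_⟩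
    have := h u (mem_closedBall_iff_norm.2 hu) v (mem_closedBall_iff_norm.2 hv)
    nlinarith [norm_nonneg (u - v)]
  have hRn : 0 ≤ R := (norm_nonneg _).trans (hR 0)
  -- step sizes bounded below
  obtain ⟨c, hc, hcl⟩ : ∃ c : ℝ, 0 < c ∧ ∀ n, c ≤ lam (n+2) := by
    refine ⟨min (lam 2) (1 / (2 * L)), lt_min (hpos 2) (by positivity), fun n => ?_⟩
    induction n with
    | zero => exact min_le_left _ _
    | succ n ih =>
      have p1 := hpos (n+1)
      have p2 := hpos (n+2)
      have hge : lam (n+2) ≤ Real.sqrt (1 + lam (n+2) / lam (n+1)) * lam (n+2) := by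
        refine le_mul_of_one_le_left p2.le ?_
        rw [Real.one_le_sqrt]
        have : 0 < lam (n+2) / lam (n+1) := by positivity
        linarith
      rw [show n + 1 + 2 = (n + 1) + 2 from rfl]
      by_cases h : f' (x (n+1+2)) = f' (x (n+1+1))
      · rw [(hr (n+1)).2 h]; exact ih.trans hge
      · rw [(hr (n+1)).1 h]
        refine le_min (ih.trans hge) ((min_le_right _ _).trans ?_)
        have h1 : 0 < ‖f' (x (n+1+2)) - f' (x (n+1+1))‖ := norm_pos_iff.2 (sub_ne_zero.2 h)
        have h2 := hL _ _ (hR (n+1)) (hR n)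
        rw [div_le_div_iff₀ (by positivity) (by positivity)]
        rw [show n + 1 + 1 = n + 2 from rfl] at *
        linarith
  -- gradients tend to zero
  have hgrad : Filter.Tendsto (fun n => ‖f' (x (n+2))‖) Filter.atTop (nhds 0) := by
    obtain ⟨l, hl⟩ := hlim s hs
    have hl' := hl.comp (Filter.tendsto_add_atTop_nat 1)
    have hd := (hl.sub hl').const_mul (2 * L / c)
    rw [sub_self, mul_zero] at hd
    have hsq : Filter.Tendsto (fun n => ‖f' (x (n+2))‖ ^ 2) Filter.atTop (nhds 0) := by
      refine squeeze_zero (fun n => by positivity) (fun n => ?_) hd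
      have h1 := adgd_coco f f' hconv s (x (n+2)) R L hLp (hg0 s hs) (hR n) (by
        intro y hy
        have := hL y s hy (by simpa using hRn)
        rwa [hg0 s hs, sub_zero] at this)
      have h2 := hstep s hs n _ h1
      have h3 : 2 * c * (‖f' (x (n+2))‖ ^ 2 / (4 * L))
          ≤ 2 * lam (n+2) * (‖f' (x (n+2))‖ ^ 2 / (4 * L)) := by
        gcongr; exact hcl n
      have h4 : ‖f' (x (n+2))‖ ^ 2
          = 2 * L / c * (2 * c * (‖f' (x (n+2))‖ ^ 2 / (4 * L))) := by
        field_simp; ring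
      rw [h4]
      refine mul_le_mul_of_nonneg_left ?_ (by positivity)
      simp only [Function.comp]
      rw [show n + 1 + 2 = n + 3 from rfl]
      linarith
    have := hsq.sqrt
    simpa [Real.sqrt_sq] using this
  -- limit points are minimizers
  have hlp : ∀ (φ : ℕ → ℕ) w, Filter.Tendsto φ Filter.atTop Filter.atTop →
      Filter.Tendsto (fun n => x (φ n + 2)) Filter.atTop (nhds w) → ∀ y, f w ≤ f y := by
    intro φ w hφ hw
    apply hmin
    have hwR : ‖w - s‖ ≤ R :=
      le_of_tendsto (hw.sub_const s).norm (Filter.Eventually.of_forall fun n => hR _)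
    have h1 : Filter.Tendsto (fun n => L * ‖x (φ n + 2) - w‖ + ‖f' (x (φ n + 2))‖)
        Filter.atTop (nhds 0) := by
      have h2 := ((hw.sub_const w).norm.const_mul L).add (hgrad.comp hφ)
      simpa using h2
    have h3 : ‖f' w‖ ≤ 0 := by
      refine ge_of_tendsto h1 (Filter.Eventually.of_forall fun n => ?_)
      have h4 := hL _ _ (hR (φ n)) hwR
      have h5 := norm_sub_norm_le (f' w) (f' (x (φ n + 2)))
      rw [norm_sub_rev] at h5
      linarith
    simpa using h3
  have hbdd : Bornology.IsBounded (Metric.closedBall s R) := Metric.isBounded_closedBall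
  have hmem : ∀ n, x (n+2) ∈ Metric.closedBall s R := fun n => mem_closedBall_iff_norm.2 (hR n)
  obtain ⟨z, -, φ, hφ, hz⟩ := tendsto_subseq_of_bounded hbdd hmem
  have hzm := hlp φ z hφ.tendsto_atTop hz
  refine ⟨z, hzm, ?_⟩
  rw [← Filter.tendsto_add_atTop_iff_nat 2]
  refine Filter.tendsto_of_subseq_tendsto (fun ns hns => ?_)
  obtain ⟨w, -, ψ, hψ, hw⟩ := tendsto_subseq_of_bounded hbdd (fun n => hmem (ns n))
  refine ⟨ψ, ?_⟩
  have hns' := hns.comp hψ.tendsto_atTop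
  have hwm := hlp (fun n => ns (ψ n)) w hns' hw
  obtain ⟨l1, hl1⟩ := hlim z hzm
  obtain ⟨l2, hl2⟩ := hlim w hwm
  have hD : Filter.Tendsto (fun n => ‖x (n+2) - z‖ ^ 2 - ‖x (n+2) - w‖ ^ 2)
      Filter.atTop (nhds (l1 - l2)) := by
    refine (hl1.sub hl2).congr (fun n => ?_)
    ring
  have u1 := tendsto_nhds_unique (hD.comp hφ.tendsto_atTop)
    (((hz.sub_const z).norm.pow 2).sub ((hz.sub_const w).norm.pow 2))
  have u2 := tendsto_nhds_unique (hD.comp hns')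
    (((hw.sub_const z).norm.pow 2).sub ((hw.sub_const w).norm.pow 2))
  simp only [sub_self, norm_zero] at u1 u2
  rw [norm_sub_rev w z] at u2
  have h0 : ‖z - w‖ = 0 := by
    have : ‖z - w‖ ^ 2 = 0 := by linarith
    simpa using this
  have hzw : z = w := sub_eq_zero.1 (norm_eq_zero.1 h0)
  rw [hzw]
  exact hw
end

section
/- Let f : ℝ^d → ℝ be differentiable, let 0 < μ ≤ L, let C ⊆ ℝ^d be convex, and suppose f is μ-strongly convex on C and ∇f is L-Lipschitz on C. Let x* ∈ C be a minimizer of f over ℝ^d with f* = f(x*). Let x^{k−1}, x^k, x^{k+1} ∈ C and λ_{k−2}, λ_{k−1}, λ_k > 0, and set θ_{k−1} = λ_{k−1}/λ_{k−2} and θ_k = λ_k/λ_{k−1}. Suppose x^k = x^{k−1} − λ_{k−1}∇f(x^{k−1}), x^{k+1} = x^k − λ_k∇f(x^k), 2λ_k‖∇f(x^k) − ∇f(x^{k−1})‖ ≤ ‖x^k − x^{k−1}‖, λ_k² ≤ (1 + θ_{k−1}/2)·λ_{k−1}², and λ_k ≤ 1/(2μ). Then ‖x^{k+1} − x*‖²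 + (1/2)(1 + 2μ/L)‖x^{k+1} − x^k‖² + 2λ_k(1+θ_k)(f(x^k) − f*) ≤ (1 − λ_kμ/2)‖x^k − x*‖² + (1/2)‖x^k − x^{k−1}‖² + 2λ_{k−1}(1 + θ_{k−1}/2)(f(x^{k−1}) − f*). -/
open scoped RealInnerProductSpace

theorem adgd_aux (mu L lk A P : ℝ) (hmu : 0 < mu) (hL : 0 < L) (hlk : 0 < lk)
    (hA : 0 ≤ A) (hlm : lk * (2 * mu) ≤ 1) (e4 : A ≤ L ^ 2 * P) :
    mu / L * (lk ^ 2 * A) ≤ 1 / 2 * (lk ^ 2 * A) + lk * mu / 2 * P := by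
  have hP : 0 ≤ P := by
    by_contra hneg
    have : L ^ 2 * P < 0 := mul_neg_of_pos_of_neg (by positivity) (not_le.mp hneg)
    linarith
  obtain ⟨r, hr⟩ : ∃ r, r = mu / L := ⟨_, rfl⟩
  have hmr : mu = r * L := by rw [hr]; field_simp
  rw [← hr]
  have h6 : (r - 1 / 2) * (lk * A) ≤ mu / 2 * P := by
    by_cases h2 : r ≤ 1 / 2
    · have h5 : 0 ≤ mu / 2 * P := by positivity
      have h7 : 0 ≤ (1 / 2 - r) * (lk * A) := mul_nonneg (by linarith) (by positivity)
      linarith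
    · have s1 : (r - 1 / 2) * A * (lk * (2 * mu)) ≤ (r - 1 / 2) * A * 1 :=
        mul_le_mul_of_nonneg_left hlm (mul_nonneg (by linarith) hA)
      have s2 : (r - 1 / 2) * A ≤ r ^ 2 * A :=
        mul_le_mul_of_nonneg_right (by nlinarith [sq_nonneg (r - 1 / 2)]) hA
      have s3 : r ^ 2 * A ≤ r ^ 2 * (L ^ 2 * P) := mul_le_mul_of_nonneg_left e4 (by positivity)
      have s4 : r ^ 2 * (L ^ 2 * P) = mu ^ 2 * P := by rw [hmr]; ring
      have s5 : 2 * mu * ((r - 1 / 2) * (lk * A)) ≤ 2 * mu * (mu / 2 * P) := by linarith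
      exact le_of_mul_le_mul_left s5 (by positivity)
  have h9 := mul_le_mul_of_nonneg_left h6 hlk.le
  linarith

/-- One-step strengthened energy inequality (inequality (18)) for adaptive gradient descent
under local strong convexity and local smoothness on a convex set `C`. -/
theorem adgd_strongly_convex_step {d : ℕ}
    (f : EuclideanSpace ℝ (Fin d) → ℝ)
    (f' : EuclideanSpace ℝ (Fin d) → EuclideanSpace ℝ (Fin d))
    (hdiff : ∀ x, HasGradientAt f (f' x) x)
    (mu L : ℝ) (hmu : 0 < mu) (hmuL : mu ≤ L)
    (C : Set (EuclideanSpace ℝ (Fin d))) (hC : Convex ℝ C)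
    (hsc : ∀ x ∈ C, ∀ y ∈ C, f x + ⟪f' x, y - x⟫ + mu / 2 * ‖y - x‖ ^ 2 ≤ f y)
    (hLip : ∀ x ∈ C, ∀ y ∈ C, ‖f' x - f' y‖ ≤ L * ‖x - y‖)
    (xstar : EuclideanSpace ℝ (Fin d)) (hxstarC : xstar ∈ C)
    (hmin : ∀ y, f xstar ≤ f y)
    (xkm1 xk xk1 : EuclideanSpace ℝ (Fin d))
    (hxkm1C : xkm1 ∈ C) (hxkC : xk ∈ C) (hxk1C : xk1 ∈ C)
    (lkm2 lkm1 lk : ℝ) (hlkm2 : 0 < lkm2) (hlkm1 : 0 < lkm1) (hlk : 0 < lk)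
    (hxk : xk = xkm1 - lkm1 • f' xkm1)
    (hxk1 : xk1 = xk - lk • f' xk)
    (hstep1 : 2 * lk * ‖f' xk - f' xkm1‖ ≤ ‖xk - xkm1‖)
    (hstep2 : lk ^ 2 ≤ (1 + (lkm1 / lkm2) / 2) * lkm1 ^ 2)
    (hlkmu : lk ≤ 1 / (2 * mu)) :
    ‖xk1 - xstar‖ ^ 2 + (1 / 2) * (1 + 2 * mu / L) * ‖xk1 - xk‖ ^ 2
        + 2 * lk * (1 + lk / lkm1) * (f xk - f xstar)
    ≤ (1 - lk * mu / 2) * ‖xk - xstar‖ ^ 2 + (1 / 2) * ‖xk - xkm1‖ ^ 2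
        + 2 * lkm1 * (1 + (lkm1 / lkm2) / 2) * (f xkm1 - f xstar) := by
  have hL : 0 < L := lt_of_lt_of_le hmu hmuL
  have hgs : f' xstar = 0 := by
    have h1 : IsLocalMin f xstar := Filter.Eventually.of_forall hmin
    have h2 := h1.hasFDerivAt_eq_zero (hdiff xstar).hasFDerivAt
    simpa using h2
  have e1 := hsc xk hxkC xstar hxstarC
  have e2 := hsc xk hxkC xkm1 hxkm1C
  have e3 := hsc xkm1 hxkm1C xk hxkC
  have e4 := hLip xk hxkC xstar hxstarC
  rw [hgs, sub_zero] at e4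
  have hd : xk - xkm1 = -(lkm1 • f' xkm1) := by rw [hxk]; abel
  have hd' : xkm1 - xk = lkm1 • f' xkm1 := by rw [← neg_sub, hd, neg_neg]
  have hd1 : xk1 - xk = -(lk • f' xk) := by rw [hxk1]; abel
  have hd2 : xk1 - xstar = (xk - xstar) - lk • f' xk := by rw [hxk1]; abel
  have hps : xstar - xk = -(xk - xstar) := by abel
  rw [hps, inner_neg_right, norm_neg] at e1
  rw [hd'] at e2
  rw [hd] at e3 hstep1
  rw [hd1, hd2, hd]
  have hK : ‖f' xk - f' xkm1‖ ^ 2 = ‖f' xk‖ ^ 2 - 2 * ⟪f' xk, f' xkm1⟫ + ‖f' xkm1‖ ^ 2 :=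
    norm_sub_sq_real _ _
  have hN : ‖(xk - xstar) - lk • f' xk‖ ^ 2
      = ‖xk - xstar‖ ^ 2 - 2 * (lk * ⟪f' xk, xk - xstar⟫) + lk ^ 2 * ‖f' xk‖ ^ 2 := by
    rw [norm_sub_sq_real, inner_smul_right, real_inner_comm, norm_smul, mul_pow,
      Real.norm_eq_abs, sq_abs]
  have hstep1' := pow_le_pow_left₀ (by positivity) hstep1 2
  have e4' := pow_le_pow_left₀ (norm_nonneg _) e4 2
  simp only [norm_neg, norm_smul, mul_pow, Real.norm_eq_abs, sq_abs, inner_neg_right,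
    inner_smul_right, real_inner_self_eq_norm_sq] at e2 e3 hstep1' e4' ⊢
  rw [hN]
  rw [hK] at hstep1'
  have hG := hmin xkm1
  generalize ‖xk - xstar‖ ^ 2 = P at *
  generalize ⟪f' xk, xk - xstar⟫ = q at *
  generalize ⟪f' xk, f' xkm1⟫ = c at *
  have hA : 0 ≤ ‖f' xk‖ ^ 2 := by positivity
  have hB : 0 ≤ ‖f' xkm1‖ ^ 2 := by positivity
  generalize ‖f' xk‖ ^ 2 = A at *
  generalize ‖f' xkm1‖ ^ 2 = B at *
  have hB2 : 0 ≤ mu / 2 * (lkm1 ^ 2 * B) := by positivity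
  have m1 : c ≤ B := by
    have : lkm1 * c ≤ lkm1 * B := by linarith
    exact le_of_mul_le_mul_left this hlkm1
  have hE : lkm1 * c ≤ f xkm1 - f xk := by linarith
  -- the G-term
  have t1 : 2 * lk * (lk / lkm1) * (f xkm1 - f xstar)
      ≤ 2 * lkm1 * (1 + (lkm1 / lkm2) / 2) * (f xkm1 - f xstar) := by
    apply mul_le_mul_of_nonneg_right _ (by linarith)
    have : lk * (lk / lkm1) ≤ lkm1 * (1 + (lkm1 / lkm2) / 2) := by
      rw [← mul_div_assoc, div_le_iff₀ hlkm1]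
      nlinarith [hstep2]
    linarith
  have t2 : 2 * lk ^ 2 * c ≤ 2 * lk * (lk / lkm1) * (f xkm1 - f xk) := by
    have := mul_le_mul_of_nonneg_left hE (show 0 ≤ 2 * lk * (lk / lkm1) by positivity)
    have h3 : 2 * lk * (lk / lkm1) * (lkm1 * c) = 2 * lk ^ 2 * c := by
      field_simp
    linarith
  have t3 : lk ^ 2 * (A - c) ≤ lk ^ 2 * (A - 2 * c + B) :=
    mul_le_mul_of_nonneg_left (by linarith) (by positivity)
  have t4 : 2 * lk * (f xk - f xstar) + lk * mu * P ≤ 2 * lk * q := by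
    have := mul_le_mul_of_nonneg_left e1 (show 0 ≤ 2 * lk by positivity)
    linarith
  -- the curvature term
  have hlm : lk * (2 * mu) ≤ 1 := by rwa [le_div_iff₀ (by positivity)] at hlkmu
  have t5 : mu / L * (lk ^ 2 * A) ≤ 1 / 2 * (lk ^ 2 * A) + lk * mu / 2 * P := by
    exact adgd_aux mu L lk A P hmu hL hlk hA hlm e4'
  have hmL : 2 * mu / L = 2 * (mu / L) := by ring
  rw [hmL]
  linarith [t1, t2, t3, t4, t5, hstep1']
end

section
/- Let f : ℝ^d → ℝ be differentiable, 0 < μ ≤ L, f μ-strongly convex with ∇f L-Lipschitz on a convex set C ⊆ ℝ^d containing a minimizer x* of f (f* = f(x*)) and points x^{k−1}, x^k, x^{k+1} ∈ C generated by x^k = x^{k−1} − λ_{k−1}∇f(x^{k−1}), x^{k+1} = x^k − λ_k∇f(x^k) with steps satisfying 2λ_k‖∇f(x^k) − ∇f(x^{k−1})‖ ≤ ‖x^k − x^{k−1}‖, λ_k² ≤ (1 + θ_{k−1}/2)λ_{k−1}², 1/(2L) ≤ λ_j ≤ 1/(2μ) for j ∈ {k−1, k}, and θ_{k−1} ≥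 μ/L, where θ_j = λ_j/λ_{j−1}. Define Ψ^{k+1} = ‖x^{k+1} − x*‖² + (1/2)(1 + 2μ/L)‖x^{k+1} − x^k‖² + 2λ_k(1+θ_k)(f(x^k) − f*) and Ψ^k = ‖x^k − x*‖² + (1/2)(1 + 2μ/L)‖x^k − x^{k−1}‖² + 2λ_{k−1}(1+θ_{k−1})(f(x^{k−1}) − f*). Then Ψ^{k+1} ≤ (1 − μ/(4L))·Ψ^k. -/
open scoped RealInnerProductSpace

theorem adgd_aux1 (l th D E R : ℝ) (hl : 1/2 ≤ l) (hth : 0 ≤ th) (hthl : th ≤ 2*l)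
    (hD : 0 ≤ D) (hE : 0 ≤ E) (hR : 0 ≤ R)
    (h1 : E^2 ≤ (th^2+1/4)*D^2) (h2 : E ≤ l*R) :
    E^2 ≤ (5/8+l*th)*D^2 + (l-1/4)*R^2 + l*(E-D)^2 := by
  have hl0 : 0 < l := by linarith
  rcases le_total l (17/10) with hc | hc
  · have h3 : E^2 ≤ l^2*R^2 := by
      have := mul_self_le_mul_self hE h2
      nlinarith
    have h4 : (l-1/4)*E^2 ≤ l^2*((l-1/4)*R^2) := by
      have := mul_le_mul_of_nonneg_left h3 (by linarith : 0 ≤ l-1/4)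
      nlinarith
    have h5 : (l-1/2)^2*E^2 ≤ l^2*((5/8+l*th)*D^2) := by
      have hq : (l-1/2)^2 ≤ l^2/2 := by nlinarith
      have a1 := mul_le_mul_of_nonneg_left h1 (sq_nonneg (l-1/2))
      have a2 : (l-1/2)^2*((th^2+1/4)*D^2) ≤ l^2/2*((th^2+1/4)*D^2) :=
        mul_le_mul_of_nonneg_right hq (by positivity)
      have a3 : th^2 ≤ 2*l*th := by nlinarith
      have a4 : l^2/2*((th^2+1/4)*D^2) ≤ l^2/2*((2*l*th+1/4)*D^2) := by gcongr
      have : 0 ≤ l^2*D^2 := by positivity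
      nlinarith
    have h6 : l^2*E^2 ≤ l^2*((5/8+l*th)*D^2 + (l-1/4)*R^2) := by nlinarith
    have h7 := le_of_mul_le_mul_left h6 (by positivity)
    have : 0 ≤ l*(E-D)^2 := by positivity
    linarith
  · have hr : 0 ≤ (l-1/4)*R^2 := mul_nonneg (by linarith) (sq_nonneg _)
    have hm : 17/10*(E-D)^2 ≤ l*(E-D)^2 := by gcongr
    have hm2 : 17/10*th*D^2 ≤ l*th*D^2 := by gcongr
    rcases le_total th (11/10) with ht | ht
    · have : (th^2+1/4)*D^2 ≤ (5/8+17/10*th)*D^2 := by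
        exact mul_le_mul_of_nonneg_right (by nlinarith) (sq_nonneg D)
      nlinarith [sq_nonneg (E-D)]
    · have : 11/10*D^2 ≤ th*D^2 := by gcongr
      nlinarith [sq_nonneg (7*E-17*D)]

theorem adgd_aux2 {V : Type*} [NormedAddCommGroup V] [InnerProductSpace ℝ V]
    (a g h : V) (th s m : ℝ) (hth : 0 ≤ th) (hs : 0 ≤ s) (hm : 0 ≤ m)
    (hstep : 2*‖s • (g - h)‖ ≤ ‖a‖) (ha : s • h = -(th • a))
    (hmono : m * ‖a‖^2 ≤ ⟪g - h, a⟫) :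
    ‖s • g‖^2 ≤ (th^2+1/4)*‖a‖^2 := by
  have e : s • g = s • (g-h) - th • a := by
    rw [smul_sub, ha]; abel
  have e2 : ⟪s • (g-h), th • a⟫ = s*(th*⟪g-h,a⟫) := by
    rw [real_inner_smul_left, real_inner_smul_right]
  rw [e, @norm_sub_sq_real, e2, norm_smul th, mul_pow, Real.norm_eq_abs, sq_abs]
  have : 0 ≤ s*(th*⟪g-h,a⟫) := by
    have : 0 ≤ ⟪g-h,a⟫ := le_trans (by positivity) hmono
    positivity
  nlinarith [norm_nonneg (s • (g-h)), norm_nonneg a]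



/-- One-step contraction `Ψ^{k+1} ≤ (1 − μ/(4L)) Ψ^k` of the full energy in the strongly
convex analysis of adaptive gradient descent. -/
theorem adgd_energy_contraction {d : ℕ}
    (f : EuclideanSpace ℝ (Fin d) → ℝ)
    (f' : EuclideanSpace ℝ (Fin d) → EuclideanSpace ℝ (Fin d))
    (hdiff : ∀ x, HasGradientAt f (f' x) x)
    (mu L : ℝ) (hmu : 0 < mu) (hmuL : mu ≤ L)
    (C : Set (EuclideanSpace ℝ (Fin d))) (hC : Convex ℝ C)
    (hsc : ∀ x ∈ C, ∀ y ∈ C, f x + ⟪f' x, y - x⟫ + mu / 2 * ‖y - x‖ ^ 2 ≤ f y)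
    (hLip : ∀ x ∈ C, ∀ y ∈ C, ‖f' x - f' y‖ ≤ L * ‖x - y‖)
    (xstar : EuclideanSpace ℝ (Fin d)) (hxstarC : xstar ∈ C)
    (hmin : ∀ y, f xstar ≤ f y)
    (xkm1 xk xk1 : EuclideanSpace ℝ (Fin d))
    (hxkm1C : xkm1 ∈ C) (hxkC : xk ∈ C) (hxk1C : xk1 ∈ C)
    (lkm2 lkm1 lk : ℝ) (hlkm2 : 0 < lkm2) (hlkm1 : 0 < lkm1) (hlk : 0 < lk)
    (hxk : xk = xkm1 - lkm1 • f' xkm1)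
    (hxk1 : xk1 = xk - lk • f' xk)
    (hstep1 : 2 * lk * ‖f' xk - f' xkm1‖ ≤ ‖xk - xkm1‖)
    (hstep2 : lk ^ 2 ≤ (1 + (lkm1 / lkm2) / 2) * lkm1 ^ 2)
    (hlb : 1 / (2 * L) ≤ lkm1) (hub : lkm1 ≤ 1 / (2 * mu))
    (hlb' : 1 / (2 * L) ≤ lk) (hub' : lk ≤ 1 / (2 * mu))
    (hth : mu / L ≤ lkm1 / lkm2) :
    ‖xk1 - xstar‖ ^ 2 + (1 / 2) * (1 + 2 * mu / L) * ‖xk1 - xk‖ ^ 2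
        + 2 * lk * (1 + lk / lkm1) * (f xk - f xstar)
    ≤ (1 - mu / (4 * L)) *
      (‖xk - xstar‖ ^ 2 + (1 / 2) * (1 + 2 * mu / L) * ‖xk - xkm1‖ ^ 2
        + 2 * lkm1 * (1 + lkm1 / lkm2) * (f xkm1 - f xstar)) := by

  have hL : 0 < L := by linarith
  have hg0 : f' xstar = 0 := by
    have h := (hdiff xstar).hasFDerivAt
    have hm : IsLocalMin f xstar := Filter.Eventually.of_forall hmin
    have := hm.hasFDerivAt_eq_zero h
    simpa using this
  obtain ⟨k, hk⟩ : ∃ k, k = mu / L := ⟨_, rfl⟩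
  obtain ⟨t, ht⟩ : ∃ t, t = lkm1 / lkm2 := ⟨_, rfl⟩
  obtain ⟨th, hthd⟩ : ∃ th, th = lk / lkm1 := ⟨_, rfl⟩
  have hmk : mu = k * L := by rw [hk]; field_simp
  have hk0 : 0 < k := by rw [hk]; positivity
  have hk1 : k ≤ 1 := by rw [hk]; exact (div_le_one hL).2 hmuL
  have hth0 : 0 < th := by rw [hthd]; positivity
  have hlth : lk = th * lkm1 := by rw [hthd]; field_simp
  have e1 : 2 * mu / L = 2 * k := by rw [hk]; ring
  have e2 : mu / (4 * L) = k / 4 := by rw [hk]; field_simp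
  rw [e1, e2, ← ht, ← hthd]
  rw [← ht] at hstep2 hth
  rw [← hk] at hth
  have hl1 : 1/2 ≤ lkm1 * L := by
    rw [div_le_iff₀ (by positivity)] at hlb; linarith
  have hl2 : 1/2 ≤ lk * L := by
    rw [div_le_iff₀ (by positivity)] at hlb'; linarith
  have hu2 : k * (lk * L) ≤ 1/2 := by
    rw [le_div_iff₀ (by positivity)] at hub'; rw [hmk] at hub'; linarith
  -- vectors
  have hd1 : xk1 - xk = -(lk • f' xk) := by rw [hxk1]; abel
  have hd0 : xk - xkm1 = -(lkm1 • f' xkm1) := by rw [hxk]; abel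
  have hE : ‖xk1 - xk‖ = ‖lk • f' xk‖ := by rw [hd1, norm_neg]
  have hEe : ‖xk1 - xk‖ = lk * ‖f' xk‖ := by
    rw [hE, norm_smul, Real.norm_eq_abs, abs_of_pos hlk]
  have hgm : lk • f' xkm1 = -(th • (xk - xkm1)) := by
    rw [hd0, hlth, smul_neg, neg_neg, smul_smul]
  have s1 := hsc xk hxkC xkm1 hxkm1C
  have s2 := hsc xkm1 hxkm1C xk hxkC
  have s3 := hsc xk hxkC xstar hxstarC
  rw [norm_sub_rev xkm1 xk] at s1
  rw [norm_sub_rev xstar xk] at s3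
  have i1 : ⟪f' xk, xkm1 - xk⟫ = -⟪f' xk, xk - xkm1⟫ := by
    rw [← inner_neg_right, neg_sub]
  have i3 : ⟪f' xk, xstar - xk⟫ = -⟪f' xk, xk - xstar⟫ := by
    rw [← inner_neg_right, neg_sub]
  rw [i1] at s1
  rw [i3] at s3
  have hmono : mu * ‖xk - xkm1‖^2 ≤ ⟪f' xk - f' xkm1, xk - xkm1⟫ := by
    rw [inner_sub_left]; linarith
  have hst : 2 * ‖lk • (f' xk - f' xkm1)‖ ≤ ‖xk - xkm1‖ := by
    rw [norm_smul, Real.norm_eq_abs, abs_of_pos hlk]; linarith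
  have hb := adgd_aux2 (xk - xkm1) (f' xk) (f' xkm1) th lk mu hth0.le hlk.le hmu.le hst hgm hmono
  rw [← hE] at hb
  have hER : ‖xk1 - xk‖ ≤ lk * L * ‖xk - xstar‖ := by
    have := hLip xk hxkC xstar hxstarC
    rw [hg0, sub_zero] at this
    rw [hEe, mul_assoc]
    gcongr
  have hthl : th ≤ 2 * (lk * L) := by
    rw [hlth]
    have := mul_le_mul_of_nonneg_left hl1 hth0.le
    linarith only [this]
  have hA := adgd_aux1 (lk * L) th ‖xk - xkm1‖ ‖xk1 - xk‖ ‖xk - xstar‖ hl2 hth0.le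
    hthl (norm_nonneg _) (norm_nonneg _) (norm_nonneg _) hb hER
  -- expansion
  have x1 : ‖xk1 - xstar‖^2 = ‖xk - xstar‖^2 - 2*lk*⟪f' xk, xk - xstar⟫ + ‖xk1 - xk‖^2 := by
    have : xk1 - xstar = (xk - xstar) - lk • f' xk := by rw [hxk1]; abel
    rw [this, @norm_sub_sq_real, hE, real_inner_smul_right, real_inner_comm]; ring
  have x2 : ‖xk1 - xk‖^2 = ⟪lk • (f' xk - f' xkm1), lk • f' xk⟫ - th*lk*⟪f' xk, xk - xkm1⟫ := by
    rw [hE, ← real_inner_self_eq_norm_sq, smul_sub, inner_sub_left, hgm, inner_neg_left,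
      real_inner_smul_left (xk - xkm1), real_inner_smul_right (xk - xkm1),
      real_inner_comm (f' xk) (xk - xkm1)]
    ring
  have x3 : 2*⟪lk • (f' xk - f' xkm1), lk • f' xk⟫ ≤ ‖xk - xkm1‖ * ‖xk1 - xk‖ := by
    have := real_inner_le_norm (lk • (f' xk - f' xkm1)) (lk • f' xk)
    rw [← hE] at this
    have := mul_le_mul_of_nonneg_right hst (norm_nonneg (xk1 - xk))
    linarith
  have hFm : 0 ≤ f xkm1 - f xstar := by linarith [hmin xkm1]
  have hlt : lk * th ≤ (1 + t/2) * lkm1 := by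
    have : lkm1 * (lk * th) ≤ lkm1 * ((1 + t/2) * lkm1) := by
      have q : lkm1 * (lk * th) = lk^2 := by rw [hlth]; ring
      rw [q]; linarith only [hstep2]
    exact le_of_mul_le_mul_left this hlkm1
  have hlt2 : lk * th ≤ (1 - k/4) * (1+t) * lkm1 := by
    refine hlt.trans (mul_le_mul_of_nonneg_right ?_ hlkm1.le)
    clear * - hk0 hk1 hth
    nlinarith
  have hF := mul_le_mul_of_nonneg_right hlt2 hFm
  generalize ‖xk - xkm1‖ = D at *
  generalize ‖xk1 - xk‖ = E at *
  generalize ‖xk - xstar‖ = R at *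
  generalize ‖xk1 - xstar‖ = N at *
  generalize ⟪f' xk, xk - xkm1⟫ = P at *
  generalize ⟪f' xk, xk - xstar⟫ = Q at *
  generalize ⟪lk • (f' xk - f' xkm1), lk • f' xk⟫ = S at *
  have y1 := mul_le_mul_of_nonneg_left s1 (by positivity : 0 ≤ 2 * (lk * th))
  have y3 := mul_le_mul_of_nonneg_left s3 (by positivity : 0 ≤ 2 * lk)
  have y4 := mul_le_mul_of_nonneg_left hA hk0.le
  have y5 := mul_le_mul_of_nonneg_right hu2 (sq_nonneg (E - D))
  have y6 : 0 ≤ k * (1 - k) * D^2 := mul_nonneg (mul_nonneg hk0.le (by linarith)) (sq_nonneg D)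
  rw [hmk] at y1 y3
  linarith only [y1, y3, y4, y5, y6, hF, x1, x2, x3]
end

section
/- Let f : ℝ^d → ℝ be differentiable, μ-strongly convex on ℝ^d with ∇f L-Lipschitz on ℝ^d, where 0 < μ ≤ L, and let x* be its (unique) minimizer with f* = f(x*), x⁰ ≠ x*. Let (x^k) and (λ_k) be generated by the modified adaptive gradient descent: λ₀ > 0, x¹ = x⁰ − λ₀∇f(x⁰), λ₁ = ‖x¹ − x⁰‖/(2‖∇f(x¹) − ∇f(x⁰)‖), and for k ≥ 2, λ_k = min{√(1 + θ_{k−1}/2)·λ_{k−1}, ‖x^k − x^{k−1}‖/(2‖∇f(x^k) − ∇f(x^{k−1})‖)} (with the second candidate omitted if ∇f(x^k) = ∇f(x^{k−1})), θ_k = λ_k/λ_{k−1}, and x^{k+1} = x^k − λ_k∇f(x^k). Define Ψ^{k+1} = ‖x^{k+1} − x*‖² + (1/2)(1 + 2μ/L)‖x^{k+1} − x^k‖² + 2λ_k(1+θ_k)(f(x^k) − f*). Then for all k ≥ 3, ‖x^{k+1} − x*‖² ≤ Ψ^{k+1} ≤ (1 − μ/(4L))^{k−2}·Ψ³. -/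
open scoped RealInnerProductSpace

/-- The energy `Ψ^k = ‖x^k − x*‖² + (1/2)(1 + 2μ/L)‖x^k − x^{k−1}‖²
  + 2λ_{k−1}(1 + θ_{k−1})(f(x^{k−1}) − f*)` from the strongly convex analysis. -/
noncomputable def adgdPsi {d : ℕ} (f : EuclideanSpace ℝ (Fin d) → ℝ)
    (xstar : EuclideanSpace ℝ (Fin d)) (x : ℕ → EuclideanSpace ℝ (Fin d))
    (lam : ℕ → ℝ) (mu L : ℝ) (k : ℕ) : ℝ :=
  ‖x k - xstar‖ ^ 2 + (1 / 2) * (1 + 2 * mu / L) * ‖x k - x (k - 1)‖ ^ 2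
    + 2 * lam (k - 1) * (1 + lam (k - 1) / lam (k - 2)) * (f (x (k - 1)) - f xstar)

theorem aux_descent {d : ℕ}
    (f : EuclideanSpace ℝ (Fin d) → ℝ)
    (f' : EuclideanSpace ℝ (Fin d) → EuclideanSpace ℝ (Fin d))
    (hdiff : ∀ x, HasGradientAt f (f' x) x) (L : ℝ)
    (hLip : ∀ x y, ‖f' x - f' y‖ ≤ L * ‖x - y‖)
    (xs : EuclideanSpace ℝ (Fin d)) (h0 : f' xs = 0) (v : EuclideanSpace ℝ (Fin d)) :
    f (xs + v) ≤ f xs + L / 2 * ‖v‖ ^ 2 := by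
  have hd : ∀ t : ℝ, HasDerivAt (fun t : ℝ => f (xs + t • v)) ⟪f' (xs + t • v), v⟫ t := by
    intro t
    have h1 : HasDerivAt (fun t : ℝ => xs + t • v) v t := by
      simpa using ((hasDerivAt_id t).smul_const v).const_add xs
    have h2 := (hdiff (xs + t • v)).hasFDerivAt.comp_hasDerivAt t h1
    have h3 : (InnerProductSpace.toDual ℝ (EuclideanSpace ℝ (Fin d)) (f' (xs + t • v))) v
        = ⟪f' (xs + t • v), v⟫ := by simp
    rw [← h3]
    exact h2
  have hB : ∀ t : ℝ, HasDerivAt (fun t : ℝ => f xs + L / 2 * ‖v‖ ^ 2 * t ^ 2)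
      (L * t * ‖v‖ ^ 2) t := by
    intro t
    have := (((hasDerivAt_id t).pow 2).const_mul (L / 2 * ‖v‖ ^ 2)).const_add (f xs)
    refine this.congr_deriv ?_
    simp only [id]
    ring
  have key := image_le_of_deriv_right_le_deriv_boundary (a := (0:ℝ)) (b := 1)
    (f := fun t : ℝ => f (xs + t • v)) (f' := fun t => ⟪f' (xs + t • v), v⟫)
    (B := fun t : ℝ => f xs + L / 2 * ‖v‖ ^ 2 * t ^ 2) (B' := fun t => L * t * ‖v‖ ^ 2)
    (fun t _ => (hd t).continuousAt.continuousWithinAt)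
    (fun t _ => (hd t).hasDerivWithinAt) (by simp)
    (fun t _ => (hB t).continuousAt.continuousWithinAt)
    (fun t _ => (hB t).hasDerivWithinAt)
    (by
      intro t ht
      have h1 := real_inner_le_norm (f' (xs + t • v)) v
      have h2 := hLip (xs + t • v) xs
      rw [h0, sub_zero, add_sub_cancel_left, norm_smul, Real.norm_of_nonneg ht.1] at h2
      have h3 := mul_le_mul_of_nonneg_right h2 (norm_nonneg v)
      nlinarith)
    (x := 1) (by simp)
  simpa using key

theorem aux_coco {d : ℕ}
    (f : EuclideanSpace ℝ (Fin d) → ℝ)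
    (f' : EuclideanSpace ℝ (Fin d) → EuclideanSpace ℝ (Fin d))
    (hdiff : ∀ x, HasGradientAt f (f' x) x)
    (mu L : ℝ) (hmu : 0 < mu) (hL : 0 < L)
    (hsc : ∀ x y, f x + ⟪f' x, y - x⟫ + mu / 2 * ‖y - x‖ ^ 2 ≤ f y)
    (hLip : ∀ x y, ‖f' x - f' y‖ ≤ L * ‖x - y‖)
    (xs : EuclideanSpace ℝ (Fin d)) (h0 : f' xs = 0) (y : EuclideanSpace ℝ (Fin d)) :
    f y - f xs + ‖f' y‖ ^ 2 / (2 * L) ≤ ⟪f' y, y - xs⟫ := by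
  have h1 := aux_descent f f' hdiff L hLip xs h0 (L⁻¹ • f' y)
  have h2 := hsc y (xs + L⁻¹ • f' y)
  have h3 : ⟪f' y, xs + L⁻¹ • f' y - y⟫ = L⁻¹ * ‖f' y‖ ^ 2 - ⟪f' y, y - xs⟫ := by
    rw [show xs + L⁻¹ • f' y - y = L⁻¹ • f' y - (y - xs) by abel, inner_sub_right,
      real_inner_smul_right, real_inner_self_eq_norm_sq]
  rw [h3] at h2
  rw [norm_smul, mul_pow, Real.norm_of_nonneg (inv_nonneg.2 hL.le)] at h1
  have h4 : 0 ≤ mu / 2 * ‖xs + L⁻¹ • f' y - y‖ ^ 2 := by positivity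
  have h5 : L / 2 * (L⁻¹ ^ 2 * ‖f' y‖ ^ 2) = ‖f' y‖ ^ 2 / (2 * L) := by field_simp
  have h6 : L⁻¹ * ‖f' y‖ ^ 2 = 2 * (‖f' y‖ ^ 2 / (2 * L)) := by field_simp
  linarith

/-- scalar core -/
theorem aux_scalar (mu L l l1 l2 D P G C M F Fm : ℝ) (hmu : 0 < mu) (hmuL : mu ≤ L)
    (hl : 1 / (2 * L) ≤ l) (hlu : l ≤ 1 / (2 * mu)) (hl1 : 1 / (2 * L) ≤ l1)
    (hl2 : 0 < l2) (hl2u : l2 ≤ 1 / (2 * mu))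
    (hth : l ^ 2 ≤ (1 + l1 / l2 / 2) * l1 ^ 2)
    (hD : 0 ≤ D) (hG : 0 ≤ G) (hM : 0 ≤ M) (hFm : 0 ≤ Fm)
    (H1 : F + mu / 2 * D ≤ P) (H2 : F + G / (2 * L) ≤ P)
    (H3 : F + l1 * C ≤ Fm) (H4 : 4 * l ^ 2 * (G - 2 * C + M) ≤ l1 ^ 2 * M)
    (H5 : 0 ≤ G - 4 * C + 4 * M) :
    D - 2 * l * P + l ^ 2 * G + (1 / 2) * (1 + 2 * mu / L) * (l ^ 2 * G)
      + 2 * l * (1 + l / l1) * F ≤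
    (1 - mu / (4 * L)) * (D + (1 / 2) * (1 + 2 * mu / L) * (l1 ^ 2 * M)
      + 2 * l1 * (1 + l1 / l2) * Fm) := by
  have hL : 0 < L := by linarith
  have hl1p : 0 < l1 := lt_of_lt_of_le (by positivity) hl1
  have hlp : 0 < l := lt_of_lt_of_le (by positivity) hl
  set th := l / l1 with hthdef
  have e1 : l = th * l1 := by rw [hthdef]; field_simp
  have hth0 : 0 < th := by positivity
  set s := l1 / l2 with hs
  have hs0 : 0 < s := by positivity
  set a := mu / (4 * L) with ha
  have ha0 : 0 < a := by positivity
  have ha1 : a ≤ 1 / 4 := by rw [ha, div_le_iff₀ (by positivity)]; linarith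
  have hmuLa : 2 * mu / L = 8 * a := by rw [ha]; field_simp; norm_num
  have hsa : 4 * a ≤ s := by
    rw [hs, le_div_iff₀ hl2]
    calc 4 * a * l2 ≤ 4 * a * (1 / (2 * mu)) := by gcongr
      _ = 1 / (2 * L) := by rw [ha]; field_simp
      _ ≤ l1 := hl1
  have hlm : 2 * a ≤ l * mu := by
    calc 2 * a = 1 / (2 * L) * mu := by rw [ha]; field_simp; norm_num
      _ ≤ l * mu := by gcongr
  have hA : 2 * l * (1 + th) * F + 2 * l * (l * C) ≤ 2 * l * F + 2 * l * th * Fm := by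
    have : 2 * l * th * (F + l1 * C) ≤ 2 * l * th * Fm := by gcongr
    have e : l * C = th * (l1 * C) := by rw [e1]; ring
    rw [e]; linarith
  have hB : l ^ 2 * G ≤ 1 / 2 * (l1 ^ 2 * M) - 1 / 2 * (l ^ 2 * G) + 2 * l * (l * C) := by
    have := mul_nonneg (sq_nonneg l) H5
    nlinarith
  have hC : l * th ≤ (1 - a) * (l1 * (1 + s)) := by
    have h1 : l * th = l ^ 2 / l1 := by rw [hthdef]; ring
    have h2 : l ^ 2 / l1 ≤ (1 + s / 2) * l1 := by
      rw [div_le_iff₀ hl1p]; linarith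
    have h3 : 1 + s / 2 ≤ (1 - a) * (1 + s) := by nlinarith
    have h4 := mul_le_mul_of_nonneg_right h3 hl1p.le
    linarith
  have hC' := mul_le_mul_of_nonneg_right hC hFm
  have hE : 4 * a * (l ^ 2 * G) ≤ l * (G / (2 * L)) := by
    have : l * l ≤ l * (1 / (2 * mu)) := by gcongr
    calc 4 * a * (l ^ 2 * G) = 4 * a * G * (l * l) := by ring
      _ ≤ 4 * a * G * (l * (1 / (2 * mu))) := by gcongr
      _ = l * (G / (2 * L)) := by rw [ha]; field_simp
  have hP1 := mul_le_mul_of_nonneg_left H1 hlp.le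
  have hP2 := mul_le_mul_of_nonneg_left H2 hlp.le
  have hDD : 2 * a * D ≤ l * mu * D := by gcongr
  have hMM : 1 / 2 * (l1 ^ 2 * M) ≤ (1 - a) * (1 / 2 * (1 + 8 * a) * (l1 ^ 2 * M)) := by
    have : (1:ℝ) ≤ (1 - a) * (1 + 8 * a) := by nlinarith
    have := mul_le_mul_of_nonneg_right this (by positivity : 0 ≤ l1 ^ 2 * M)
    linarith
  rw [hmuLa]
  linarith

/-- Theorem 3 of "Adaptive gradient descent without descent": linear convergence of the
modified adaptive gradient descent for a strongly convex smooth function. -/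
theorem adgd_linear_rate {d : ℕ}
    (f : EuclideanSpace ℝ (Fin d) → ℝ)
    (f' : EuclideanSpace ℝ (Fin d) → EuclideanSpace ℝ (Fin d))
    (hdiff : ∀ x, HasGradientAt f (f' x) x)
    (mu L : ℝ) (hmu : 0 < mu) (hmuL : mu ≤ L)
    (hsc : ∀ x y, f x + ⟪f' x, y - x⟫ + mu / 2 * ‖y - x‖ ^ 2 ≤ f y)
    (hLip : ∀ x y, ‖f' x - f' y‖ ≤ L * ‖x - y‖)
    (xstar : EuclideanSpace ℝ (Fin d)) (hmin : ∀ y, f xstar ≤ f y)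
    (x : ℕ → EuclideanSpace ℝ (Fin d)) (lam : ℕ → ℝ)
    (hx0 : x 0 ≠ xstar) (hl0 : 0 < lam 0)
    (hupd : ∀ k, x (k + 1) = x k - lam k • f' (x k))
    (hl1 : lam 1 = ‖x 1 - x 0‖ / (2 * ‖f' (x 1) - f' (x 0)‖))
    (hrec : ∀ k, 2 ≤ k →
      (f' (x k) ≠ f' (x (k - 1)) →
        lam k = min (Real.sqrt (1 + (lam (k - 1) / lam (k - 2)) / 2) * lam (k - 1))
          (‖x k - x (k - 1)‖ / (2 * ‖f' (x k) - f' (x (k - 1))‖))) ∧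
      (f' (x k) = f' (x (k - 1)) →
        lam k = Real.sqrt (1 + (lam (k - 1) / lam (k - 2)) / 2) * lam (k - 1))) :
    ∀ k, 3 ≤ k →
      ‖x (k + 1) - xstar‖ ^ 2 ≤ adgdPsi f xstar x lam mu L (k + 1) ∧
      adgdPsi f xstar x lam mu L (k + 1) ≤
        (1 - mu / (4 * L)) ^ (k - 2) * adgdPsi f xstar x lam mu L 3 := by
  have hL : 0 < L := by linarith
  have hg0 : f' xstar = 0 := by
    have h1 : IsLocalMin f xstar := Filter.Eventually.of_forall hmin
    have h2 := h1.hasFDerivAt_eq_zero (hdiff xstar).hasFDerivAt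
    simpa using h2
  -- strong monotonicity
  have hmono : ∀ y z, mu * ‖y - z‖ ≤ ‖f' y - f' z‖ := by
    intro y z
    have h1 := hsc y z
    have h2 := hsc z y
    have h3 : ⟪f' y, z - y⟫ = - ⟪f' y, y - z⟫ := by rw [← inner_neg_right, neg_sub]
    have h4 : ⟪f' y - f' z, y - z⟫ = ⟪f' y, y - z⟫ - ⟪f' z, y - z⟫ := inner_sub_left _ _ _
    have h5 := real_inner_le_norm (f' y - f' z) (y - z)
    rw [norm_sub_rev z y] at h1
    rcases eq_or_lt_of_le (norm_nonneg (y - z)) with h | h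
    · rw [← h]; simp
    · have : mu * ‖y - z‖ * ‖y - z‖ ≤ ‖f' y - f' z‖ * ‖y - z‖ := by nlinarith
      exact le_of_mul_le_mul_right this h
  have hzero : ∀ y, f' y = 0 → y = xstar := by
    intro y hy
    have := hmono y xstar
    rw [hy, hg0, sub_zero, norm_zero] at this
    have h2 : ‖y - xstar‖ ≤ 0 := by
      by_contra h
      push Not at h
      nlinarith [mul_pos hmu h]
    exact sub_eq_zero.1 (norm_le_zero_iff.1 h2)
  have hq : ∀ y z, y ≠ z → 1 / (2 * L) ≤ ‖y - z‖ / (2 * ‖f' y - f' z‖) ∧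
      ‖y - z‖ / (2 * ‖f' y - f' z‖) ≤ 1 / (2 * mu) ∧ f' y ≠ f' z := by
    intro y z hyz
    have hn : 0 < ‖y - z‖ := norm_pos_iff.2 (sub_ne_zero.2 hyz)
    have h1 := hmono y z
    have h2 := hLip y z
    have h3 : 0 < ‖f' y - f' z‖ := lt_of_lt_of_le (by positivity) h1
    refine ⟨?_, ?_, ?_⟩
    · rw [div_le_div_iff₀ (by positivity) (by positivity)]; linarith
    · rw [div_le_div_iff₀ (by positivity) (by positivity)]; linarith
    · exact sub_ne_zero.1 (norm_pos_iff.1 h3)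
  have hsq1 : ∀ t : ℝ, 0 ≤ t → 1 ≤ Real.sqrt (1 + t / 2) := by
    intro t ht
    rw [Real.one_le_sqrt]; linarith
  have hx10 : f' (x 0) ≠ 0 → x 1 ≠ x 0 := by
    intro h0 h
    have := hupd 0
    rw [zero_add, h] at this
    have h2 : lam 0 • f' (x 0) = 0 := sub_eq_self.1 this.symm
    rcases smul_eq_zero.1 h2 with h3 | h3
    · linarith
    · exact h0 h3
  have hx1 : x 1 ≠ x 0 := hx10 (fun h => hx0 (hzero _ h))
  have hlam1 : 1 / (2 * L) ≤ lam 1 ∧ lam 1 ≤ 1 / (2 * mu) := by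
    rw [hl1]; exact ⟨(hq _ _ hx1).1, (hq _ _ hx1).2.1⟩
  have hi : 0 < 1 / (2 * L) := by positivity
  -- lower bound and ratio bound
  have hlow : ∀ n, 0 < lam n ∧ 1 / (2 * L) ≤ lam (n + 1) := by
    intro n
    induction n with
    | zero => exact ⟨hl0, hlam1.1⟩
    | succ n ih =>
      have hp : 0 < lam (n + 1) := lt_of_lt_of_le hi ih.2
      refine ⟨hp, ?_⟩
      have hs := hsq1 (lam (n + 1) / lam n) (div_pos hp ih.1).le
      have hr := hrec (n + 2) (by omega)
      simp only [show n + 2 - 1 = n + 1 from rfl, show n + 2 - 2 = n from rfl] at hr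
      have hb : 1 / (2 * L) ≤ Real.sqrt (1 + lam (n + 1) / lam n / 2) * lam (n + 1) := by
        nlinarith [ih.2]
      by_cases hc : f' (x (n + 2)) = f' (x (n + 1))
      · rw [show n + 1 + 1 = n + 2 from rfl, hr.2 hc]; exact hb
      · rw [show n + 1 + 1 = n + 2 from rfl, hr.1 hc]
        refine le_min hb (hq _ _ ?_).1
        intro h; exact hc (by rw [h])
  have hratio : ∀ n, lam (n + 2) ^ 2 ≤
      (1 + lam (n + 1) / lam n / 2) * lam (n + 1) ^ 2 := by
    intro n
    have hr := hrec (n + 2) (by omega)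
    simp only [show n + 2 - 1 = n + 1 from rfl, show n + 2 - 2 = n from rfl] at hr
    have hle : lam (n + 2) ≤ Real.sqrt (1 + lam (n + 1) / lam n / 2) * lam (n + 1) := by
      by_cases hc : f' (x (n + 2)) = f' (x (n + 1))
      · exact (hr.2 hc).le
      · rw [hr.1 hc]; exact min_le_left _ _
    have h0 := (hlow (n + 2)).1
    have h1 : 0 ≤ 1 + lam (n + 1) / lam n / 2 := by
      have := div_pos (hlow (n + 1)).1 (hlow n).1
      linarith
    calc lam (n + 2) ^ 2 ≤ (Real.sqrt (1 + lam (n + 1) / lam n / 2) * lam (n + 1)) ^ 2 := by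
          gcongr
      _ = _ := by rw [mul_pow, Real.sq_sqrt h1]
  have hne : ∀ n, f' (x n) ≠ 0 → x (n + 1) ≠ x n := by
    intro n h0 h
    have := hupd n
    rw [h] at this
    have h2 : lam n • f' (x n) = 0 := sub_eq_self.1 this.symm
    rcases smul_eq_zero.1 h2 with h3 | h3
    · linarith [(hlow n).1]
    · exact h0 h3
  have hback : ∀ n, f' (x (n + 1)) ≠ 0 → f' (x n) ≠ 0 := by
    intro n h h0
    apply h
    rw [hupd n, h0, smul_zero, sub_zero, h0]
  have hup : ∀ n, f' (x n) ≠ 0 → lam (n + 1) ≤ 1 / (2 * mu) := by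
    intro n h
    cases n with
    | zero => exact hlam1.2
    | succ n =>
      have h2 := hq _ _ (hne _ h)
      have hr := (hrec (n + 2) (by omega)).1 h2.2.2
      rw [show n + 1 + 1 = n + 2 from rfl, hr]
      exact (min_le_right _ _).trans h2.2.1
  have hcurv : ∀ n, 2 * lam (n + 2) * ‖f' (x (n + 2)) - f' (x (n + 1))‖ ≤
      ‖x (n + 2) - x (n + 1)‖ := by
    intro n
    by_cases hc : f' (x (n + 2)) = f' (x (n + 1))
    · rw [hc, sub_self, norm_zero, mul_zero]; exact norm_nonneg _
    · have hr := (hrec (n + 2) (by omega)).1 hc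
      have h1 : lam (n + 2) ≤ ‖x (n + 2) - x (n + 1)‖ /
          (2 * ‖f' (x (n + 2)) - f' (x (n + 1))‖) := by
        rw [hr]; exact min_le_right _ _
      have h3 : 0 < ‖f' (x (n + 2)) - f' (x (n + 1))‖ := norm_pos_iff.2 (sub_ne_zero.2 hc)
      rw [le_div_iff₀ (by positivity)] at h1
      linarith
  have hPsi : ∀ n, ‖x (n + 2) - xstar‖ ^ 2 ≤ adgdPsi f xstar x lam mu L (n + 2) := by
    intro n
    unfold adgdPsi
    simp only [show n + 2 - 1 = n + 1 from rfl, show n + 2 - 2 = n from rfl]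
    have h1 := (hlow n).1
    have h2 := (hlow (n + 1)).1
    have h3 := sub_nonneg.2 (hmin (x (n + 1)))
    have h4 : 0 ≤ (1 / 2) * (1 + 2 * mu / L) * ‖x (n + 2) - x (n + 1)‖ ^ 2 := by positivity
    have h5 : 0 ≤ 2 * lam (n + 1) * (1 + lam (n + 1) / lam n) * (f (x (n + 1)) - f xstar) := by
      positivity
    linarith
  have ha1 : mu / (4 * L) ≤ 1 / 4 := by rw [div_le_iff₀ (by positivity)]; linarith
  have hstep : ∀ n, adgdPsi f xstar x lam mu L (n + 4) ≤
      (1 - mu / (4 * L)) * adgdPsi f xstar x lam mu L (n + 3) := by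
    intro n
    by_cases hz : f' (x (n + 3)) = 0
    · have hx3 := hzero _ hz
      have hx4 : x (n + 4) = xstar := by
        have := hupd (n + 3)
        rw [hz, smul_zero, sub_zero, hx3] at this
        exact this
      have e : adgdPsi f xstar x lam mu L (n + 4) = 0 := by
        unfold adgdPsi
        simp only [show n + 4 - 1 = n + 3 from rfl, hx3, hx4]
        simp
      rw [e]
      exact mul_nonneg (by linarith) ((sq_nonneg _).trans (hPsi (n + 1)))
    · have hz2 := hback _ hz
      have hz1 := hback _ hz2
      have hz0 := hback _ hz1
      have key := aux_scalar mu L (lam (n + 3)) (lam (n + 2)) (lam (n + 1))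
        (‖x (n + 3) - xstar‖ ^ 2) ⟪f' (x (n + 3)), x (n + 3) - xstar⟫
        (‖f' (x (n + 3))‖ ^ 2) ⟪f' (x (n + 3)), f' (x (n + 2))⟫ (‖f' (x (n + 2))‖ ^ 2)
        (f (x (n + 3)) - f xstar) (f (x (n + 2)) - f xstar) hmu hmuL
        (hlow (n + 2)).2 (hup _ hz2) (hlow (n + 1)).2 (hlow (n + 1)).1 (hup _ hz0)
        (hratio (n + 1)) (by positivity) (by positivity) (by positivity)
        (sub_nonneg.2 (hmin _))
      have u3 : x (n + 4) = x (n + 3) - lam (n + 3) • f' (x (n + 3)) := hupd (n + 3)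
      have u2 : x (n + 3) = x (n + 2) - lam (n + 2) • f' (x (n + 2)) := hupd (n + 2)
      have d3 : x (n + 3) - x (n + 2) = - (lam (n + 2) • f' (x (n + 2))) := by rw [u2]; abel
      have d3' : x (n + 2) - x (n + 3) = lam (n + 2) • f' (x (n + 2)) := by rw [u2]; abel
      have d4 : x (n + 4) - x (n + 3) = - (lam (n + 3) • f' (x (n + 3))) := by rw [u3]; abel
      have n3 : ‖x (n + 3) - x (n + 2)‖ ^ 2 = lam (n + 2) ^ 2 * ‖f' (x (n + 2))‖ ^ 2 := by
        rw [d3, norm_neg, norm_smul, mul_pow, Real.norm_eq_abs, sq_abs]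
      have n4 : ‖x (n + 4) - x (n + 3)‖ ^ 2 = lam (n + 3) ^ 2 * ‖f' (x (n + 3))‖ ^ 2 := by
        rw [d4, norm_neg, norm_smul, mul_pow, Real.norm_eq_abs, sq_abs]
      have n5 : ‖x (n + 4) - xstar‖ ^ 2 = ‖x (n + 3) - xstar‖ ^ 2
          - 2 * lam (n + 3) * ⟪f' (x (n + 3)), x (n + 3) - xstar⟫
          + lam (n + 3) ^ 2 * ‖f' (x (n + 3))‖ ^ 2 := by
        rw [show x (n + 4) - xstar = (x (n + 3) - xstar) - lam (n + 3) • f' (x (n + 3)) by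
          rw [u3]; abel, norm_sub_sq_real, real_inner_smul_right, norm_smul, mul_pow,
          Real.norm_eq_abs, sq_abs, real_inner_comm]
        ring
      have k := key ?_ ?_ ?_ ?_ ?_
      · unfold adgdPsi
        simp only [show n + 4 - 1 = n + 3 from rfl, show n + 4 - 2 = n + 2 from rfl,
          show n + 3 - 1 = n + 2 from rfl, show n + 3 - 2 = n + 1 from rfl]
        rw [n5, n4, n3]
        exact k
      · have h := hsc (x (n + 3)) xstar
        rw [← neg_sub (x (n + 3)) xstar, inner_neg_right, norm_neg] at h
        linarith
      · exact aux_coco f f' hdiff mu L hmu hL hsc hLip xstar hg0 _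
      · have h := hsc (x (n + 3)) (x (n + 2))
        rw [d3', real_inner_smul_right] at h
        have : 0 ≤ mu / 2 * ‖lam (n + 2) • f' (x (n + 2))‖ ^ 2 := by positivity
        linarith
      · have h : 2 * lam (n + 3) * ‖f' (x (n + 3)) - f' (x (n + 2))‖ ≤
          ‖x (n + 3) - x (n + 2)‖ := hcurv (n + 1)
        have h0 := (hlow (n + 3)).1
        have h2 := pow_le_pow_left₀ (by positivity) h 2
        rw [n3, mul_pow, norm_sub_sq_real] at h2
        linarith
      · have h := sq_nonneg ‖f' (x (n + 3)) - (2:ℝ) • f' (x (n + 2))‖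
        rw [norm_sub_sq_real, real_inner_smul_right, norm_smul, mul_pow] at h
        norm_num at h
        linarith
  have hall : ∀ n, adgdPsi f xstar x lam mu L (n + 3) ≤
      (1 - mu / (4 * L)) ^ n * adgdPsi f xstar x lam mu L 3 := by
    intro n
    induction n with
    | zero => simp
    | succ n ih =>
      have h1 := hstep n
      have h2 : (1 - mu / (4 * L)) * adgdPsi f xstar x lam mu L (n + 3) ≤
        (1 - mu / (4 * L)) * ((1 - mu / (4 * L)) ^ n * adgdPsi f xstar x lam mu L 3) :=
        mul_le_mul_of_nonneg_left ih (by linarith)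
      rw [show n + 1 + 3 = n + 4 from rfl, pow_succ']
      linarith
  intro k hk
  obtain ⟨m, rfl⟩ : ∃ m, k = m + 3 := ⟨k - 3, by omega⟩
  refine ⟨hPsi (m + 2), ?_⟩
  have := hall (m + 1)
  rw [show m + 3 - 2 = m + 1 from rfl]
  exact this
end

section
/- Let α ∈ (0,1) and β = 1/(2(1−α)). Let f : ℝ^d → ℝ be convex and differentiable, x* a minimizer of f with f* = f(x*). Let x^{k−1}, x^k, x^{k+1} ∈ ℝ^d and λ_{k−1}, λ_k > 0 satisfy x^k = x^{k−1} − λ_{k−1}∇f(x^{k−1}), x^{k+1} = x^k − λ_k∇f(x^k), and λ_k‖∇f(x^k) − ∇f(x^{k−1})‖ ≤ α‖x^k − x^{k−1}‖. Set θ_k = λ_k/λ_{k−1}. Then ‖x^{k+1} − x*‖² + 2λ_k(1 + θ_kβ)(f(x^k) − f*) + αβ‖x^{k+1} − x^k‖² ≤ ‖x^k − x*‖² + 2λ_kθ_kβ(f(x^{k−1}) − f*) + αβ‖x^k − x^{k−1}‖². -/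
open scoped RealInnerProductSpace

/-- One-step energy inequality for the general update of adaptive gradient descent
(Algorithm 4 with parameters `α ∈ (0,1)` and `β = 1/(2(1−α))`). -/
theorem adgd_general_energy_step {d : ℕ}
    (alpha beta : ℝ) (halpha0 : 0 < alpha) (halpha1 : alpha < 1)
    (hbeta : beta = 1 / (2 * (1 - alpha)))
    (f : EuclideanSpace ℝ (Fin d) → ℝ)
    (f' : EuclideanSpace ℝ (Fin d) → EuclideanSpace ℝ (Fin d))
    (hdiff : ∀ x, HasGradientAt f (f' x) x)
    (hconv : ∀ x y, f x + ⟪f' x, y - x⟫ ≤ f y)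
    (xstar : EuclideanSpace ℝ (Fin d)) (hmin : ∀ y, f xstar ≤ f y)
    (xkm1 xk xk1 : EuclideanSpace ℝ (Fin d))
    (lkm1 lk : ℝ) (hlkm1 : 0 < lkm1) (hlk : 0 < lk)
    (hxk : xk = xkm1 - lkm1 • f' xkm1)
    (hxk1 : xk1 = xk - lk • f' xk)
    (hstep : lk * ‖f' xk - f' xkm1‖ ≤ alpha * ‖xk - xkm1‖) :
    ‖xk1 - xstar‖ ^ 2 + 2 * lk * (1 + (lk / lkm1) * beta) * (f xk - f xstar)
        + alpha * beta * ‖xk1 - xk‖ ^ 2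
    ≤ ‖xk - xstar‖ ^ 2 + 2 * lk * (lk / lkm1) * beta * (f xkm1 - f xstar)
        + alpha * beta * ‖xk - xkm1‖ ^ 2 := by
  have hb : 0 < beta := by
    rw [hbeta]
    have : 0 < 1 - alpha := by linarith
    positivity
  have hb2 : 2 * beta - 2 * alpha * beta = 1 := by
    rw [hbeta]
    have : 1 - alpha ≠ 0 := by linarith
    field_simp
  set g := f' xk with hg
  set p := f' xkm1 with hp
  have e1 : xk1 - xk = -(lk • g) := by rw [hxk1]; abel
  have e2 : xk - xkm1 = -(lkm1 • p) := by rw [hxk]; abel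
  have e3 : xk1 - xstar = (xk - xstar) - lk • g := by rw [hxk1]; abel
  have n1 : ‖xk1 - xk‖ = lk * ‖g‖ := by
    rw [e1, norm_neg, norm_smul, Real.norm_of_nonneg hlk.le]
  have n2 : ‖xk - xkm1‖ = lkm1 * ‖p‖ := by
    rw [e2, norm_neg, norm_smul, Real.norm_of_nonneg hlkm1.le]
  have n3 : ‖xk1 - xstar‖ ^ 2
      = ‖xk - xstar‖ ^ 2 - 2 * lk * ⟪g, xk - xstar⟫ + (lk * ‖g‖) ^ 2 := by
    rw [e3, norm_sub_sq_real, norm_smul, Real.norm_of_nonneg hlk.le, real_inner_smul_right,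
      real_inner_comm]
    ring
  have c1 : f xk - f xstar ≤ ⟪g, xk - xstar⟫ := by
    have h := hconv xk xstar
    rw [← neg_sub xk xstar, inner_neg_right] at h
    linarith
  have c2 : f xk - f xkm1 ≤ -(lkm1 * ⟪g, p⟫) := by
    have h := hconv xk xkm1
    rw [← neg_sub xk xkm1, inner_neg_right, e2, inner_neg_right, real_inner_smul_right] at h
    linarith
  have c3 : ‖g‖ ^ 2 - ⟪g, p⟫ ≤ ‖g‖ * ‖g - p‖ := by
    have h := real_inner_le_norm g (g - p)
    rwa [inner_sub_right, real_inner_self_eq_norm_sq] at h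
  rw [n2] at hstep
  rw [n1, n2, n3]
  have k1 : 2 * lk * (f xk - f xstar) ≤ 2 * lk * ⟪g, xk - xstar⟫ :=
    mul_le_mul_of_nonneg_left c1 (by positivity)
  have k2 : 2 * lk * (lk / lkm1) * beta * (f xk - f xkm1) ≤ -(2 * lk ^ 2 * beta * ⟪g, p⟫) := by
    calc _ ≤ 2 * lk * (lk / lkm1) * beta * (-(lkm1 * ⟪g, p⟫)) :=
          mul_le_mul_of_nonneg_left c2 (by positivity)
      _ = _ := by field_simp
  have k3 : 2 * lk ^ 2 * (‖g‖ ^ 2 - ⟪g, p⟫) ≤ alpha * ((lk * ‖g‖) ^ 2 + (lkm1 * ‖p‖) ^ 2) := by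
    have h1 := mul_le_mul_of_nonneg_left c3 (by positivity : 0 ≤ 2 * lk ^ 2)
    have h2 := mul_le_mul_of_nonneg_left hstep (by positivity : 0 ≤ 2 * (lk * ‖g‖))
    have h3 := mul_nonneg halpha0.le (sq_nonneg (lk * ‖g‖ - lkm1 * ‖p‖))
    nlinarith
  have k4 := mul_le_mul_of_nonneg_left k3 hb.le
  have k5 : (lk * ‖g‖) ^ 2 = (2 * beta - 2 * alpha * beta) * (lk * ‖g‖) ^ 2 := by
    rw [hb2, one_mul]
  linarith
end

section
/- Let α ∈ (0, 1/2] and β = 1/(2(1−α)). Let f : ℝ^d → ℝ be differentiable, let C ⊆ ℝ^d, and let L > 0 be such that ‖∇f(x) − ∇f(y)‖ ≤ L‖x − y‖ for all x, y ∈ C. Let (x^k)_{k≥0} ⊆ C and (λ_k) satisfy λ₀ > 0, x^{k+1} = x^k − λ_k∇f(x^k) for all k ≥ 0, ∇f(x¹) ≠ ∇f(x⁰) with λ₁ = α‖x¹ − x⁰‖/‖∇f(x¹) − ∇f(x⁰)‖, and for k ≥ 2, λ_k = min{√(1/β + θ_{k−1})·λ_{k−1}, α‖x^k − x^{k−1}‖/‖∇f(x^k)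 − ∇f(x^{k−1})‖} when ∇f(x^k) ≠ ∇f(x^{k−1}) and λ_k = √(1/β + θ_{k−1})·λ_{k−1} otherwise, where θ_k = λ_k/λ_{k−1}. Then λ_k ≥ α/L for all k ≥ 1. -/
open scoped RealInnerProductSpace

/-- Stepsize lower bound `λ_k ≥ α/L` for the general update of adaptive gradient descent
with `α ∈ (0, 1/2]`. -/
theorem adgd_general_stepsize_lower_bound_small_alpha {d : ℕ}
    (alpha beta : ℝ) (halpha0 : 0 < alpha) (halpha1 : alpha ≤ 1 / 2)
    (hbeta : beta = 1 / (2 * (1 - alpha)))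
    (f : EuclideanSpace ℝ (Fin d) → ℝ)
    (f' : EuclideanSpace ℝ (Fin d) → EuclideanSpace ℝ (Fin d))
    (hdiff : ∀ x, HasGradientAt f (f' x) x)
    (C : Set (EuclideanSpace ℝ (Fin d))) (L : ℝ) (hL : 0 < L)
    (hLip : ∀ x ∈ C, ∀ y ∈ C, ‖f' x - f' y‖ ≤ L * ‖x - y‖)
    (x : ℕ → EuclideanSpace ℝ (Fin d)) (hxC : ∀ k, x k ∈ C)
    (lam : ℕ → ℝ) (hl0 : 0 < lam 0)
    (hupd : ∀ k, x (k + 1) = x k - lam k • f' (x k))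
    (hne1 : f' (x 1) ≠ f' (x 0))
    (hl1 : lam 1 = alpha * ‖x 1 - x 0‖ / ‖f' (x 1) - f' (x 0)‖)
    (hrec : ∀ k, 2 ≤ k →
      (f' (x k) ≠ f' (x (k - 1)) →
        lam k = min (Real.sqrt (1 / beta + lam (k - 1) / lam (k - 2)) * lam (k - 1))
          (alpha * ‖x k - x (k - 1)‖ / ‖f' (x k) - f' (x (k - 1))‖)) ∧
      (f' (x k) = f' (x (k - 1)) →
        lam k = Real.sqrt (1 / beta + lam (k - 1) / lam (k - 2)) * lam (k - 1))) :
    ∀ k, 1 ≤ k → alpha / L ≤ lam k := by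
  have hq : ∀ a ∈ C, ∀ b ∈ C, f' a ≠ f' b →
      alpha / L ≤ alpha * ‖a - b‖ / ‖f' a - f' b‖ := by
    intro a ha b hb hne
    have hpos : 0 < ‖f' a - f' b‖ := norm_pos_iff.mpr (sub_ne_zero.mpr hne)
    rw [div_le_div_iff₀ hL hpos]
    have := mul_le_mul_of_nonneg_left (hLip a ha b hb) halpha0.le
    linarith
  have haL : 0 < alpha / L := div_pos halpha0 hL
  have hb1 : 1 ≤ 1 / beta := by
    rw [hbeta, one_div_one_div]; linarith
  have key : ∀ k, 0 < lam k ∧ alpha / L ≤ lam (k + 1) := by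
    intro k
    induction k with
    | zero =>
      refine ⟨hl0, ?_⟩
      rw [zero_add, hl1]
      exact hq _ (hxC 1) _ (hxC 0) hne1
    | succ k ih =>
      obtain ⟨h0, h1⟩ := ih
      have h1' : 0 < lam (k + 1) := lt_of_lt_of_le haL h1
      refine ⟨h1', ?_⟩
      obtain ⟨r1, r2⟩ := hrec (k + 2) (by omega)
      have e1 : k + 2 - 1 = k + 1 := by omega
      have e2 : k + 2 - 2 = k := by omega
      rw [e1, e2] at r1 r2
      have hs : 1 ≤ Real.sqrt (1 / beta + lam (k + 1) / lam k) := by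
        rw [Real.one_le_sqrt]
        have := div_pos h1' h0
        linarith
      have hm : alpha / L ≤ Real.sqrt (1 / beta + lam (k + 1) / lam k) * lam (k + 1) :=
        h1.trans (le_mul_of_one_le_left h1'.le hs)
      change alpha / L ≤ lam (k + 2)
      by_cases hne : f' (x (k + 2)) = f' (x (k + 1))
      · rw [r2 hne]; exact hm
      · rw [r1 hne]
        exact le_min hm (hq _ (hxC _) _ (hxC _) hne)
  intro k hk
  obtain ⟨j, rfl⟩ := Nat.exists_eq_add_of_le' hk
  exact (key j).2
end

section
/- Let α ∈ (1/2, 1) and β = 1/(2(1−α)) (so β > 1). Let f : ℝ^d → ℝ be differentiable, let C ⊆ ℝ^d, and let L > 0 be such that ‖∇f(x) − ∇f(y)‖ ≤ L‖x − y‖ for all x, y ∈ C. Let (x^k)_{k≥0} ⊆ C and (λ_k) satisfy λ₀ > 0, x^{k+1} = x^k − λ_k∇f(x^k) for all k ≥ 0, ∇f(x¹) ≠ ∇f(x⁰) with λ₁ = α‖x¹ − x⁰‖/‖∇f(x¹) − ∇f(x⁰)‖, and for k ≥ 2, λ_k = min{√(1/β + θ_{k−1})·λ_{k−1}, α‖x^k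 − x^{k−1}‖/‖∇f(x^k) − ∇f(x^{k−1})‖} when ∇f(x^k) ≠ ∇f(x^{k−1}) and λ_k = √(1/β + θ_{k−1})·λ_{k−1} otherwise, where θ_k = λ_k/λ_{k−1}. Then λ_k ≥ 2α(1−α)/L for all k ≥ 1. -/
open scoped RealInnerProductSpace

/-- Stepsize lower bound `λ_k ≥ 2α(1−α)/L` for the general update of adaptive gradient descent
with `α ∈ (1/2, 1)`. -/
theorem adgd_general_stepsize_lower_bound_large_alpha {d : ℕ}
    (alpha beta : ℝ) (halpha0 : 1 / 2 < alpha) (halpha1 : alpha < 1)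
    (hbeta : beta = 1 / (2 * (1 - alpha)))
    (f : EuclideanSpace ℝ (Fin d) → ℝ)
    (f' : EuclideanSpace ℝ (Fin d) → EuclideanSpace ℝ (Fin d))
    (hdiff : ∀ x, HasGradientAt f (f' x) x)
    (C : Set (EuclideanSpace ℝ (Fin d))) (L : ℝ) (hL : 0 < L)
    (hLip : ∀ x ∈ C, ∀ y ∈ C, ‖f' x - f' y‖ ≤ L * ‖x - y‖)
    (x : ℕ → EuclideanSpace ℝ (Fin d)) (hxC : ∀ k, x k ∈ C)
    (lam : ℕ → ℝ) (hl0 : 0 < lam 0)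
    (hupd : ∀ k, x (k + 1) = x k - lam k • f' (x k))
    (hne1 : f' (x 1) ≠ f' (x 0))
    (hl1 : lam 1 = alpha * ‖x 1 - x 0‖ / ‖f' (x 1) - f' (x 0)‖)
    (hrec : ∀ k, 2 ≤ k →
      (f' (x k) ≠ f' (x (k - 1)) →
        lam k = min (Real.sqrt (1 / beta + lam (k - 1) / lam (k - 2)) * lam (k - 1))
          (alpha * ‖x k - x (k - 1)‖ / ‖f' (x k) - f' (x (k - 1))‖)) ∧
      (f' (x k) = f' (x (k - 1)) →
        lam k = Real.sqrt (1 / beta + lam (k - 1) / lam (k - 2)) * lam (k - 1))) :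
    ∀ k, 1 ≤ k → 2 * alpha * (1 - alpha) / L ≤ lam k := by
  have hc : 1 / beta = 2 * (1 - alpha) := by rw [hbeta, one_div_one_div]
  rw [hc] at hrec
  obtain ⟨c, hcdef⟩ : ∃ c, c = 2 * (1 - alpha) := ⟨_, rfl⟩
  rw [← hcdef] at hrec
  have hc0 : 0 < c := by linarith
  have hc1 : c < 1 := by linarith
  obtain ⟨a, hadef⟩ : ∃ a, a = alpha / L := ⟨_, rfl⟩
  have ha0 : 0 < a := by rw [hadef]; apply div_pos <;> linarith
  have hgoal : 2 * alpha * (1 - alpha) / L = c * a := by rw [hcdef, hadef]; ring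
  rw [hgoal]
  have hgrad : ∀ k, f' (x (k + 1)) ≠ f' (x k) →
      a ≤ alpha * ‖x (k + 1) - x k‖ / ‖f' (x (k + 1)) - f' (x k)‖ := by
    intro k hk
    have hp : 0 < ‖f' (x (k + 1)) - f' (x k)‖ := norm_pos_iff.mpr (sub_ne_zero.mpr hk)
    have h := hLip _ (hxC (k + 1)) _ (hxC k)
    rw [hadef, div_le_div_iff₀ hL hp]
    nlinarith
  have key : ∀ n, 0 < lam n ∧ c * a ≤ lam (n + 1) ∧
      (a ≤ lam (n + 1) ∨ c * a ≤ lam (n + 1) * (lam (n + 1) / lam n)) := by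
    intro n
    induction n with
    | zero =>
      have h1 : a ≤ lam 1 := by rw [hl1]; exact hgrad 0 hne1
      exact ⟨hl0, by simp only [zero_add]; nlinarith, Or.inl h1⟩
    | succ n ih =>
      obtain ⟨hn, hu, hor⟩ := ih
      have hpos : 0 < lam (n + 1) := lt_of_lt_of_le (mul_pos hc0 ha0) hu
      have hr := hrec (n + 2) (by omega)
      have e1 : n + 2 - 1 = n + 1 := by omega
      have e2 : n + 2 - 2 = n := by omega
      rw [e1, e2] at hr
      have hg := hgrad (n + 1)
      have ht : 0 < lam (n + 1) / lam n := div_pos hpos hn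
      generalize lam (n + 1) / lam n = t at hr hor ht
      have hcases : a ≤ lam (n + 2) ∨ lam (n + 2) = Real.sqrt (c + t) * lam (n + 1) := by
        by_cases h : f' (x (n + 2)) = f' (x (n + 1))
        · exact Or.inr (hr.2 h)
        · have h2 := hr.1 h
          rcases min_choice (Real.sqrt (c + t) * lam (n + 1))
            (alpha * ‖x (n + 2) - x (n + 1)‖ / ‖f' (x (n + 2)) - f' (x (n + 1))‖) with h3 | h3
          · right; rw [h2, h3]
          · left; rw [h2, h3]; exact hg h
      refine ⟨hpos, ?_⟩
      rcases hcases with h | h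
      · exact ⟨by change c * a ≤ lam (n + 2); nlinarith, Or.inl h⟩
      · have hs0 : 0 ≤ Real.sqrt (c + t) := Real.sqrt_nonneg _
        have hs := Real.mul_self_sqrt (show 0 ≤ c + t by linarith)
        have hq : lam (n + 2) / lam (n + 1) = Real.sqrt (c + t) := by
          rw [h]; field_simp
        change c * a ≤ lam (n + 2) ∧ (_ ∨ c * a ≤ lam (n + 2) * (lam (n + 2) / lam (n + 1)))
        rw [hq]
        have hP : c * a ≤ lam (n + 2) * Real.sqrt (c + t) := by
          have : lam (n + 2) * Real.sqrt (c + t) = lam (n + 1) * (c + t) := by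
            rw [h, ← hs]; simp only [hs]; linear_combination lam (n + 1) * hs
          rw [this]
          have p1 := mul_pos hpos hc0
          have p2 := mul_pos hpos ht
          rcases hor with h4 | h4
          · nlinarith
          · nlinarith
        refine ⟨?_, Or.inr hP⟩
        have hl : 0 ≤ lam (n + 2) := by rw [h]; positivity
        rcases le_total (Real.sqrt (c + t)) 1 with h5 | h5
        · nlinarith
        · rw [h]; nlinarith
  intro k hk
  obtain ⟨n, rfl⟩ := Nat.exists_eq_add_of_le' hk
  exact (key n).2.1
end

section
/- Let α ∈ (0,1) and β = 1/(2(1−α)). Let f : ℝ^d → ℝ be convex and differentiable, x* a minimizer of f with f* = f(x*), and let (x^k)_{k≥0} and (λ_k)_{k≥0} with λ_k > 0 satisfy x^{k+1} = x^k − λ_k∇f(x^k) for all k ≥ 0, and for all k ≥ 1 the conditions λ_k‖∇f(x^k) − ∇f(x^{k−1})‖ ≤ α‖x^k − x^{k−1}‖ and λ_{k+1}² ≤ (1/β + θ_k)λ_k², where θ_k = λ_k/λ_{k−1}. Define D = ‖x¹ − x*‖² + αβ‖x¹ − x⁰‖² + 2λ₁θ₁β(f(x⁰) − f*), weights w_i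 = λ_i(1 + θ_iβ) − λ_{i+1}θ_{i+1}β, S_k = λ_k(1 + θ_kβ) + Σ_{i=1}^{k−1} w_i, and x̂^k = (λ_k(1+θ_kβ)x^k + Σ_{i=1}^{k−1} w_i x^i)/S_k. Then for every k ≥ 1, each w_i is nonnegative, S_k = Σ_{i=1}^{k} λ_i + λ₁θ₁β, and f(x̂^k) − f* ≤ D/(2S_k). -/
open scoped RealInnerProductSpace BigOperators

/-- The weights `w_i = λ_i (1 + θ_i β) − λ_{i+1} θ_{i+1} β` of Theorem 4 (general update). -/
noncomputable def adgdWGen (beta : ℝ) (lam : ℕ → ℝ) (i : ℕ) : ℝ :=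
  lam i * (1 + (lam i / lam (i - 1)) * beta) - lam (i + 1) * ((lam (i + 1) / lam i) * beta)

/-- The normalization `S_k = λ_k (1 + θ_k β) + Σ_{i=1}^{k−1} w_i` of Theorem 4. -/
noncomputable def adgdSGen (beta : ℝ) (lam : ℕ → ℝ) (k : ℕ) : ℝ :=
  lam k * (1 + (lam k / lam (k - 1)) * beta) + ∑ i ∈ Finset.Icc 1 (k - 1), adgdWGen beta lam i

/-- The ergodic iterate `x̂^k` of Theorem 4. -/
noncomputable def adgdXhatGen {d : ℕ} (beta : ℝ) (lam : ℕ → ℝ)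
    (x : ℕ → EuclideanSpace ℝ (Fin d)) (k : ℕ) : EuclideanSpace ℝ (Fin d) :=
  (adgdSGen beta lam k)⁻¹ •
    ((lam k * (1 + (lam k / lam (k - 1)) * beta)) • x k
      + ∑ i ∈ Finset.Icc 1 (k - 1), adgdWGen beta lam i • x i)

theorem adgd_energy_aux {E : Type*} [NormedAddCommGroup E] [InnerProductSpace ℝ E]
    (alpha beta l l0 F F0 Fs : ℝ) (halpha0 : 0 < alpha) (hbeta0 : 0 < beta)
    (hb : 2 * beta * (1 - alpha) = 1)
    (g g0 p p0 q s : E) (hl : 0 < l) (hl0 : 0 < l0)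
    (hq : q = p - l • g) (hp : p = p0 - l0 • g0)
    (h1 : l * ‖g - g0‖ ≤ alpha * ‖p - p0‖)
    (c1 : F + ⟪g, s - p⟫ ≤ Fs) (c2 : F + ⟪g, p0 - p⟫ ≤ F0) :
    ‖q - s‖ ^ 2 + alpha * beta * ‖q - p‖ ^ 2 + 2 * (l * (1 + l / l0 * beta)) * (F - Fs)
      ≤ ‖p - s‖ ^ 2 + alpha * beta * ‖p - p0‖ ^ 2 + 2 * (l * (l / l0 * beta)) * (F0 - Fs) := by
  have e1 : ‖q - s‖ ^ 2 = ‖p - s‖ ^ 2 + 2 * l * ⟪g, s - p⟫ + ‖q - p‖ ^ 2 := by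
    have : q - s = (p - s) - l • g := by rw [hq]; abel
    have h2 : q - p = - (l • g) := by rw [hq]; abel
    have h3 : s - p = -(p - s) := by abel
    rw [this, h2, norm_neg, norm_sub_sq_real, h3, inner_neg_right, inner_smul_right,
      real_inner_comm]
    ring
  have e2 : ‖q - p‖ ^ 2 = - (l * ⟪g - g0, q - p⟫) + l / l0 * l * ⟪g, p0 - p⟫ := by
    have h2 : q - p = - (l • g) := by rw [hq]; abel
    have h3 : p0 - p = l0 • g0 := by rw [hp]; abel
    rw [h2, h3, norm_neg, norm_smul, inner_neg_right, inner_smul_right, inner_smul_right,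
      inner_sub_left, real_inner_self_eq_norm_sq, Real.norm_eq_abs, mul_pow, sq_abs,
      real_inner_comm g g0]
    field_simp
    ring
  have e3 : - (l * ⟪g - g0, q - p⟫) ≤ alpha / 2 * (‖p - p0‖ ^ 2 + ‖q - p‖ ^ 2) := by
    have h2 := abs_real_inner_le_norm (g - g0) (q - p)
    have h3 := neg_abs_le ⟪g - g0, q - p⟫
    have h4 : l * (- ⟪g - g0, q - p⟫) ≤ l * (‖g - g0‖ * ‖q - p‖) :=
      mul_le_mul_of_nonneg_left (by linarith) hl.le
    have h5 := mul_le_mul_of_nonneg_right h1 (norm_nonneg (q - p))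
    have h6 := mul_nonneg halpha0.le (sq_nonneg (‖p - p0‖ - ‖q - p‖))
    nlinarith
  have e4 : l / l0 * l * ⟪g, p0 - p⟫ ≤ l / l0 * l * (F0 - F) :=
    mul_le_mul_of_nonneg_left (by linarith) (by positivity)
  have e5 : 2 * l * ⟪g, s - p⟫ ≤ 2 * l * (Fs - F) :=
    mul_le_mul_of_nonneg_left (by linarith) (by positivity)
  have e6 : 2 * beta * ‖q - p‖ ^ 2 ≤
      2 * beta * (alpha / 2 * (‖p - p0‖ ^ 2 + ‖q - p‖ ^ 2) + l / l0 * l * (F0 - F)) :=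
    mul_le_mul_of_nonneg_left (by linarith) (by positivity)
  have e7 : 2 * beta * ‖q - p‖ ^ 2 = ‖q - p‖ ^ 2 + 2 * beta * alpha * ‖q - p‖ ^ 2 := by
    linear_combination ‖q - p‖ ^ 2 * hb
  rw [e1]
  linarith

/-- Theorem 4 of "Adaptive gradient descent without descent" (general update, complexity
part): nonnegative weights, `S_k = Σ_{i=1}^k λ_i + λ₁θ₁β`, and `f(x̂^k) − f* ≤ D/(2S_k)`. -/
theorem adgd_general_ergodic_rate {d : ℕ}
    (alpha beta : ℝ) (halpha0 : 0 < alpha) (halpha1 : alpha < 1)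
    (hbeta : beta = 1 / (2 * (1 - alpha)))
    (f : EuclideanSpace ℝ (Fin d) → ℝ)
    (f' : EuclideanSpace ℝ (Fin d) → EuclideanSpace ℝ (Fin d))
    (hdiff : ∀ x, HasGradientAt f (f' x) x)
    (hconv : ∀ x y, f x + ⟪f' x, y - x⟫ ≤ f y)
    (xstar : EuclideanSpace ℝ (Fin d)) (hmin : ∀ y, f xstar ≤ f y)
    (x : ℕ → EuclideanSpace ℝ (Fin d)) (lam : ℕ → ℝ)
    (hlam : ∀ k, 0 < lam k)
    (hupd : ∀ k, x (k + 1) = x k - lam k • f' (x k))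
    (hstep1 : ∀ k, 1 ≤ k → lam k * ‖f' (x k) - f' (x (k - 1))‖ ≤ alpha * ‖x k - x (k - 1)‖)
    (hstep2 : ∀ k, 1 ≤ k → lam (k + 1) ^ 2 ≤ (1 / beta + lam k / lam (k - 1)) * lam k ^ 2) :
    ∀ k, 1 ≤ k →
      (∀ i ∈ Finset.Icc 1 (k - 1), 0 ≤ adgdWGen beta lam i) ∧
      adgdSGen beta lam k = (∑ i ∈ Finset.Icc 1 k, lam i) + lam 1 * (lam 1 / lam 0) * beta ∧
      f (adgdXhatGen beta lam x k) - f xstar ≤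
        (‖x 1 - xstar‖ ^ 2 + alpha * beta * ‖x 1 - x 0‖ ^ 2
            + 2 * lam 1 * (lam 1 / lam 0) * beta * (f (x 0) - f xstar))
          / (2 * adgdSGen beta lam k) := by
  have ha : 0 < 1 - alpha := by linarith
  have hb0 : 0 < beta := by rw [hbeta]; positivity
  have hb : 2 * beta * (1 - alpha) = 1 := by rw [hbeta]; field_simp
  have hw : ∀ i, 1 ≤ i → 0 ≤ adgdWGen beta lam i := by
    intro i hi
    have h := hstep2 i hi
    have hi0 := hlam i
    have hi1 := hlam (i - 1)
    have e : adgdWGen beta lam i = beta / lam i *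
        ((1 / beta + lam i / lam (i - 1)) * lam i ^ 2 - lam (i + 1) ^ 2) := by
      unfold adgdWGen
      field_simp
    rw [e]
    exact mul_nonneg (by positivity) (by linarith)
  have hS : ∀ n, adgdSGen beta lam (n + 1) =
      (∑ i ∈ Finset.Icc 1 (n + 1), lam i) + lam 1 * (lam 1 / lam 0) * beta := by
    intro n
    induction n with
    | zero => simp [adgdSGen]; ring
    | succ n ih =>
      rw [Finset.sum_Icc_succ_top (by omega)]
      unfold adgdSGen at ih ⊢
      simp only [Nat.add_sub_cancel] at ih ⊢
      rw [Finset.sum_Icc_succ_top (by omega)]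
      have : adgdWGen beta lam (n + 1) = lam (n + 1) * (1 + (lam (n + 1) / lam n) * beta)
        - lam (n + 1 + 1) * ((lam (n + 1 + 1) / lam (n + 1)) * beta) := rfl
      linarith
  have hE := fun n => adgd_energy_aux alpha beta (lam (n + 1)) (lam n) (f (x (n + 1))) (f (x n))
    (f xstar) halpha0 hb0 hb (f' (x (n + 1))) (f' (x n)) (x (n + 1)) (x n) (x (n + 2)) xstar
    (hlam _) (hlam _) (hupd (n + 1)) (hupd n) (hstep1 (n + 1) (by omega)) (hconv _ _) (hconv _ _)
  have hsum : ∀ n, ‖x (n + 2) - xstar‖ ^ 2 + alpha * beta * ‖x (n + 2) - x (n + 1)‖ ^ 2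
      + 2 * (lam (n + 1) * (1 + lam (n + 1) / lam n * beta)) * (f (x (n + 1)) - f xstar)
      + 2 * ∑ i ∈ Finset.Icc 1 n, adgdWGen beta lam i * (f (x i) - f xstar)
      ≤ ‖x 1 - xstar‖ ^ 2 + alpha * beta * ‖x 1 - x 0‖ ^ 2
            + 2 * lam 1 * (lam 1 / lam 0) * beta * (f (x 0) - f xstar) := by
    intro n
    induction n with
    | zero =>
      have := hE 0
      simp only [Finset.Icc_eq_empty (show ¬ (1 ≤ 0) by omega), Finset.sum_empty]
      simp only [zero_add] at this ⊢
      linarith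
    | succ n ih =>
      have := hE (n + 1)
      rw [Finset.sum_Icc_succ_top (by omega)]
      have e : adgdWGen beta lam (n + 1) = lam (n + 1) * (1 + (lam (n + 1) / lam n) * beta)
        - lam (n + 2) * ((lam (n + 2) / lam (n + 1)) * beta) := rfl
      rw [e]
      simp only [show n + 1 + 1 = n + 2 from rfl, show n + 1 + 2 = n + 3 from rfl] at this ⊢
      linarith
  intro k hk
  obtain ⟨n, rfl⟩ : ∃ n, k = n + 1 := ⟨k - 1, by omega⟩
  refine ⟨fun i hi => hw i (Finset.mem_Icc.1 hi).1, hS n, ?_⟩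
  have hSpos : 0 < adgdSGen beta lam (n + 1) := by
    rw [hS]
    have h1 : 0 ≤ ∑ i ∈ Finset.Icc 1 (n + 1), lam i := Finset.sum_nonneg fun i _ => (hlam i).le
    have := hlam 1
    have := hlam 0
    positivity
  rw [le_div_iff₀ (by positivity)]
  refine le_trans ?_ (hsum n)
  have hX : adgdSGen beta lam (n + 1) • adgdXhatGen beta lam x (n + 1) =
      (lam (n + 1) * (1 + (lam (n + 1) / lam n) * beta)) • x (n + 1)
      + ∑ i ∈ Finset.Icc 1 n, adgdWGen beta lam i • x i := by
    unfold adgdXhatGen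
    rw [smul_inv_smul₀ hSpos.ne']
    rfl
  have hSd : adgdSGen beta lam (n + 1) = lam (n + 1) * (1 + (lam (n + 1) / lam n) * beta)
      + ∑ i ∈ Finset.Icc 1 n, adgdWGen beta lam i := rfl
  generalize adgdXhatGen beta lam x (n + 1) = z at hX ⊢
  generalize adgdSGen beta lam (n + 1) = S at hX hSd ⊢
  have hA : 0 ≤ lam (n + 1) * (1 + (lam (n + 1) / lam n) * beta) := by
    have := hlam (n + 1)
    have := hlam n
    positivity
  generalize lam (n + 1) * (1 + (lam (n + 1) / lam n) * beta) = A at hA hX hSd ⊢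
  have hI := congrArg (fun v => ⟪f' z, v⟫) hX
  simp only [inner_add_right, inner_smul_right, inner_sum] at hI
  have j1 := mul_le_mul_of_nonneg_left (hconv z (x (n + 1))) hA
  have j2 : ∑ i ∈ Finset.Icc 1 n, adgdWGen beta lam i * (f z - f xstar + (⟪f' z, x i⟫ - ⟪f' z, z⟫))
      ≤ ∑ i ∈ Finset.Icc 1 n, adgdWGen beta lam i * (f (x i) - f xstar) := by
    refine Finset.sum_le_sum fun i hi => ?_
    refine mul_le_mul_of_nonneg_left ?_ (hw i (Finset.mem_Icc.1 hi).1)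
    have := hconv z (x i)
    rw [inner_sub_right] at this
    linarith
  simp only [mul_add (adgdWGen _ _ _), mul_sub (adgdWGen _ _ _) ⟪f' z, _⟫, Finset.sum_add_distrib, Finset.sum_sub_distrib,
    ← Finset.sum_mul] at j2
  rw [inner_sub_right] at j1
  have p1 : 0 ≤ ‖x (n + 2) - xstar‖ ^ 2 := by positivity
  have p2 : 0 ≤ alpha * beta * ‖x (n + 2) - x (n + 1)‖ ^ 2 := by positivity
  generalize ∑ i ∈ Finset.Icc 1 n, adgdWGen beta lam i = W at *
  subst hSd
  linarith
end

section
/- Let f : ℝ^d → ℝ be convex and differentiable with ∇f L-Lipschitz on ℝ^d (L > 0), and let x* be a minimizer of f with f* = f(x*). Let x^{k−1}, x^k, x^{k+1} ∈ ℝ^d and λ_{k−1}, λ_k > 0 satisfy x^k = x^{k−1} − λ_{k−1}∇f(x^{k−1}), x^{k+1} = x^k − λ_k∇f(x^k), x^k ≠ x^{k−1}, ∇f(x^k) ≠ ∇f(x^{k−1}), and λ_k ≤ 1/(λ_{k−1}L²) + 1/(2L_k), where L_k = ‖∇f(x^k) − ∇f(x^{k−1})‖/‖x^k − x^{k−1}‖.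 Set θ_k = λ_k/λ_{k−1}. Then ‖x^{k+1} − x*‖² + (1/2)‖x^{k+1} − x^k‖² + 2λ_k(1+θ_k)(f(x^k) − f*) ≤ ‖x^k − x*‖² + (1/2)‖x^k − x^{k−1}‖² + 2λ_kθ_k(f(x^{k−1}) − f*). -/
open scoped RealInnerProductSpace

theorem adgd_descent {d : ℕ}
    (f : EuclideanSpace ℝ (Fin d) → ℝ)
    (f' : EuclideanSpace ℝ (Fin d) → EuclideanSpace ℝ (Fin d))
    (hdiff : ∀ x, HasGradientAt f (f' x) x)
    (L : ℝ)
    (hLip : ∀ x y, ‖f' x - f' y‖ ≤ L * ‖x - y‖) (x v : EuclideanSpace ℝ (Fin d)) :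
    f (x + v) ≤ f x + ⟪f' x, v⟫ + L / 2 * ‖v‖ ^ 2 := by
  have hd : ∀ t : ℝ, HasDerivAt
      (fun t : ℝ => f (x + t • v) - t * ⟪f' x, v⟫ - L / 2 * ‖v‖ ^ 2 * t ^ 2)
      (⟪f' (x + t • v), v⟫ - ⟪f' x, v⟫ - L / 2 * ‖v‖ ^ 2 * (2 * t)) t := by
    intro t
    have h1 : HasDerivAt (fun t : ℝ => x + t • v) v t := by
      simpa using ((hasDerivAt_id t).smul_const v).const_add x
    have h2 := (hdiff (x + t • v)).hasFDerivAt.comp_hasDerivAt t h1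
    have h3 : HasDerivAt (fun t : ℝ => f (x + t • v)) ⟪f' (x + t • v), v⟫ t := by
      simp at h2
      exact h2
    have h4 : HasDerivAt (fun t : ℝ => t * ⟪f' x, v⟫) ⟪f' x, v⟫ t := by
      simpa using (hasDerivAt_id t).mul_const ⟪f' x, v⟫
    have h5 : HasDerivAt (fun t : ℝ => L / 2 * ‖v‖ ^ 2 * t ^ 2) (L / 2 * ‖v‖ ^ 2 * (2 * t)) t := by
      simpa using (hasDerivAt_pow 2 t).const_mul (L / 2 * ‖v‖ ^ 2)
    exact (h3.sub h4).sub h5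
  have ha : AntitoneOn (fun t : ℝ => f (x + t • v) - t * ⟪f' x, v⟫ - L / 2 * ‖v‖ ^ 2 * t ^ 2)
      (Set.Icc 0 1) := by
    apply antitoneOn_of_deriv_nonpos (convex_Icc 0 1)
    · exact fun t _ => (hd t).continuousAt.continuousWithinAt
    · exact fun t _ => (hd t).differentiableAt.differentiableWithinAt
    · intro t ht
      rw [interior_Icc] at ht
      rw [(hd t).deriv, ← inner_sub_left]
      have h1 := real_inner_le_norm (f' (x + t • v) - f' x) v
      have h2 := hLip (x + t • v) x
      rw [add_sub_cancel_left, norm_smul, Real.norm_of_nonneg ht.1.le] at h2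
      have h3 := mul_le_mul_of_nonneg_right h2 (norm_nonneg v)
      nlinarith
  have := ha (Set.left_mem_Icc.2 zero_le_one) (Set.right_mem_Icc.2 zero_le_one) zero_le_one
  simp at this
  linarith

theorem adgd_coco_s15 {d : ℕ}
    (f : EuclideanSpace ℝ (Fin d) → ℝ)
    (f' : EuclideanSpace ℝ (Fin d) → EuclideanSpace ℝ (Fin d))
    (hdiff : ∀ x, HasGradientAt f (f' x) x)
    (hconv : ∀ x y, f x + ⟪f' x, y - x⟫ ≤ f y)
    (L : ℝ) (hL : 0 < L)
    (hLip : ∀ x y, ‖f' x - f' y‖ ≤ L * ‖x - y‖) (x y : EuclideanSpace ℝ (Fin d)) :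
    f x + ⟪f' x, y - x⟫ + 1 / (2 * L) * ‖f' x - f' y‖ ^ 2 ≤ f y := by
  have h1 := adgd_descent f f' hdiff L hLip y (L⁻¹ • (f' x - f' y))
  have h2 := hconv x (y + L⁻¹ • (f' x - f' y))
  have e : y + L⁻¹ • (f' x - f' y) - x = (y - x) + L⁻¹ • (f' x - f' y) := by abel
  rw [e, inner_add_right, inner_smul_right] at h2
  rw [inner_smul_right, norm_smul, Real.norm_of_nonneg (inv_nonneg.2 hL.le)] at h1
  have e2 : ⟪f' x, f' x - f' y⟫ - ⟪f' y, f' x - f' y⟫ = ‖f' x - f' y‖ ^ 2 := by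
    rw [← inner_sub_left, real_inner_self_eq_norm_sq]
  have e3 : ⟪f' x, f' x - f' y⟫ = ⟪f' y, f' x - f' y⟫ + ‖f' x - f' y‖ ^ 2 := by linarith
  rw [e3] at h2
  have e4 : L / 2 * (L⁻¹ * ‖f' x - f' y‖) ^ 2 = 1 / (2 * L) * ‖f' x - f' y‖ ^ 2 := by
    field_simp
  have e5 : L⁻¹ * ‖f' x - f' y‖ ^ 2 = 2 * (1 / (2 * L) * ‖f' x - f' y‖ ^ 2) := by
    field_simp
  rw [e4] at h1
  rw [mul_add, e5] at h2
  linarith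

theorem adgd_scalar (l m L a b G : ℝ) (hl : 0 < l) (hm : 0 < m) (hL : 0 < L) (ha : 0 < a)
    (hb : 0 < b) (hG : 0 ≤ G) (h : l ≤ 1 / (m * L ^ 2) + 1 / (2 * (a / b))) :
    2 * l ^ 2 * a * G ≤ 1 / 2 * b ^ 2 + 1 / 2 * l ^ 2 * G ^ 2 + l ^ 2 * a ^ 2 / (m * L)
      + l * G ^ 2 / L := by
  rcases le_total (l * m * L ^ 2) 1 with hc | hc
  · have : l ^ 2 * a ^ 2 / (m * L) + l * G ^ 2 / L - 2 * l ^ 2 * a * G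
        = ((l * a - l * m * L * G) ^ 2 + l * m * G ^ 2 * (1 - l * m * L ^ 2)) / (m * L) := by
      field_simp
      ring
    have h2 : 0 ≤ ((l * a - l * m * L * G) ^ 2 + l * m * G ^ 2 * (1 - l * m * L ^ 2))
        / (m * L) := by
      have : 0 ≤ 1 - l * m * L ^ 2 := by linarith
      positivity
    have : 0 ≤ 1 / 2 * b ^ 2 + 1 / 2 * l ^ 2 * G ^ 2 := by positivity
    linarith
  · have e1 : l ^ 2 * a ^ 2 / (m * L) + l * G ^ 2 / L - 2 * l * a * G / (m * L ^ 2)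
        = ((l * L * a - G) ^ 2 + (l * m * L ^ 2 - 1) * G ^ 2) / (m * L ^ 3) := by
      field_simp
      ring
    have h2 : 0 ≤ ((l * L * a - G) ^ 2 + (l * m * L ^ 2 - 1) * G ^ 2) / (m * L ^ 3) := by
      have : 0 ≤ l * m * L ^ 2 - 1 := by linarith
      positivity
    have h3 := mul_le_mul_of_nonneg_left h (show 0 ≤ 2 * l * a * G by positivity)
    have e2 : 2 * l * a * G * (1 / (m * L ^ 2) + 1 / (2 * (a / b)))
        = 2 * l * a * G / (m * L ^ 2) + l * G * b := by
      field_simp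
    rw [e2] at h3
    nlinarith [sq_nonneg (b - l * G)]

/-- Theorem 5 (one-step energy inequality for Algorithm 5, where the global smoothness
constant `L` is known). -/
theorem adgd_known_L_energy_step {d : ℕ}
    (f : EuclideanSpace ℝ (Fin d) → ℝ)
    (f' : EuclideanSpace ℝ (Fin d) → EuclideanSpace ℝ (Fin d))
    (hdiff : ∀ x, HasGradientAt f (f' x) x)
    (hconv : ∀ x y, f x + ⟪f' x, y - x⟫ ≤ f y)
    (L : ℝ) (hL : 0 < L)
    (hLip : ∀ x y, ‖f' x - f' y‖ ≤ L * ‖x - y‖)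
    (xstar : EuclideanSpace ℝ (Fin d)) (hmin : ∀ y, f xstar ≤ f y)
    (xkm1 xk xk1 : EuclideanSpace ℝ (Fin d))
    (lkm1 lk : ℝ) (hlkm1 : 0 < lkm1) (hlk : 0 < lk)
    (hxk : xk = xkm1 - lkm1 • f' xkm1)
    (hxk1 : xk1 = xk - lk • f' xk)
    (hxne : xk ≠ xkm1) (hgne : f' xk ≠ f' xkm1)
    (hstep : lk ≤ 1 / (lkm1 * L ^ 2)
      + 1 / (2 * (‖f' xk - f' xkm1‖ / ‖xk - xkm1‖))) :
    ‖xk1 - xstar‖ ^ 2 + (1 / 2) * ‖xk1 - xk‖ ^ 2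
        + 2 * lk * (1 + lk / lkm1) * (f xk - f xstar)
    ≤ ‖xk - xstar‖ ^ 2 + (1 / 2) * ‖xk - xkm1‖ ^ 2
        + 2 * lk * (lk / lkm1) * (f xkm1 - f xstar) := by
  have I1 := adgd_coco_s15 f f' hdiff hconv L hL hLip xk xstar
  have I2 := adgd_coco_s15 f f' hdiff hconv L hL hLip xk xkm1
  have hz : f' xstar = 0 := by
    have h := adgd_coco_s15 f f' hdiff hconv L hL hLip xstar (xstar - L⁻¹ • f' xstar)
    have h1 := adgd_descent f f' hdiff L hLip xstar (-(L⁻¹ • f' xstar))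
    have h2 := hmin (xstar + -(L⁻¹ • f' xstar))
    rw [inner_neg_right, inner_smul_right, norm_neg, norm_smul,
      Real.norm_of_nonneg (inv_nonneg.2 hL.le), real_inner_self_eq_norm_sq] at h1
    have e : L / 2 * (L⁻¹ * ‖f' xstar‖) ^ 2 = L⁻¹ * ‖f' xstar‖ ^ 2 / 2 := by
      field_simp
    have h3 : L⁻¹ * ‖f' xstar‖ ^ 2 ≤ 0 := by linarith
    have h4 : ‖f' xstar‖ ^ 2 ≤ 0 := by
      by_contra hh
      have := mul_pos (inv_pos.2 hL) (not_le.1 hh)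
      linarith
    have h5 : ‖f' xstar‖ = 0 := by nlinarith [norm_nonneg (f' xstar)]
    exact norm_eq_zero.1 h5
  rw [hz, sub_zero] at I1
  have ha : 0 < ‖f' xk - f' xkm1‖ := norm_pos_iff.2 (sub_ne_zero.2 hgne)
  have hb : 0 < ‖xk - xkm1‖ := norm_pos_iff.2 (sub_ne_zero.2 hxne)
  have S := adgd_scalar lk lkm1 L _ _ ‖f' xk‖ hlk hlkm1 hL ha hb (norm_nonneg _) hstep
  have C := real_inner_le_norm (f' xk - f' xkm1) (f' xk)
  rw [inner_sub_left, real_inner_self_eq_norm_sq, real_inner_comm] at C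
  have e1 : xkm1 - xk = lkm1 • f' xkm1 := by rw [hxk]; abel
  rw [e1, inner_smul_right] at I2
  have e2 : ‖xk1 - xstar‖ ^ 2 = ‖xk - xstar‖ ^ 2 + 2 * lk * ⟪f' xk, xstar - xk⟫
      + lk ^ 2 * ‖f' xk‖ ^ 2 := by
    have : xk1 - xstar = (xk - xstar) - lk • f' xk := by rw [hxk1]; abel
    rw [this, norm_sub_sq_real, inner_smul_right, norm_smul, Real.norm_of_nonneg hlk.le,
      real_inner_comm, ← neg_sub xstar xk, inner_neg_right]
    ring
  have e3 : ‖xk1 - xk‖ ^ 2 = lk ^ 2 * ‖f' xk‖ ^ 2 := by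
    have : xk1 - xk = - (lk • f' xk) := by rw [hxk1]; abel
    rw [this, norm_neg, norm_smul, Real.norm_of_nonneg hlk.le, mul_pow]
  rw [e2, e3]
  clear e2 e3 e1 hstep hz
  generalize ‖f' xk - f' xkm1‖ = a at *
  generalize ‖xk - xkm1‖ = b at *
  generalize ‖f' xk‖ = G at *
  generalize ⟪f' xk, xstar - xk⟫ = p at *
  generalize ⟪f' xk, f' xkm1⟫ = q at *
  have J1 := mul_le_mul_of_nonneg_left I1 (show 0 ≤ 2 * lk by positivity)
  have J2 := mul_le_mul_of_nonneg_left I2 (show 0 ≤ 2 * lk * (lk / lkm1) by positivity)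
  have J3 := mul_le_mul_of_nonneg_left C (show 0 ≤ 2 * lk ^ 2 by positivity)
  have k1 : 2 * lk * (f xk + p + 1 / (2 * L) * G ^ 2)
      = 2 * lk * f xk + 2 * lk * p + lk * G ^ 2 / L := by
    field_simp
  have k2 : 2 * lk * (lk / lkm1) * (f xk + lkm1 * q + 1 / (2 * L) * a ^ 2)
      = 2 * lk * (lk / lkm1) * f xk + 2 * lk ^ 2 * q + lk ^ 2 * a ^ 2 / (lkm1 * L) := by
    field_simp
  rw [k1] at J1
  rw [k2] at J2
  linarith
end
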